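/- arXiv:2502.20863 — 3 statements merged into one kernel-verified Lean document; each statement's English description precedes it below -/
import Mathlib

section
/- For every integer k ≥ 2 there exists a constant c_k > 0 such that for all integers Δ ≥ 1/c_k and n ≥ Δ, there exists a k-uniform hypergraph H on n vertices with maximum degree at most Δ whose 4-color Ramsey number satisfies r(H;4) ≥ tw_k(c_k·Δ)·n. -/
noncomputable section

/-- The tower function over the reals: `tw 1 x = x` and `tw k x = 2 ^ (tw (k-1) x)`
for `k ≥ 2`. -/
def twR : ℕ → ℝ → ℝ
  | 0, x => x
  | 1, x => x
  | (k + 2), x => (2 : ℝ) ^ twR (k + 1) x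

/-- `arrowsProp n N q E` says that every `q`-coloring of the subsets of an `N`-element
set yields a monochromatic copy of the hypergraph on `[n]` with edge set `E`. -/
def arrowsProp (n N q : ℕ) (E : Finset (Finset (Fin n))) : Prop :=
  ∀ χ : Finset (Fin N) → Fin q, ∃ f : Fin n ↪ Fin N, ∃ i : Fin q,
    ∀ e ∈ E, χ (e.map f) = i

/-- The `q`-color Ramsey number of the hypergraph on `[n]` with edge set `E`: the least `N`
such that every `q`-coloring of the subsets of an `N`-element set contains a monochromatic
copy. -/
def ramseyNumber (n q : ℕ) (E : Finset (Finset (Fin n))) : ℕ :=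
  sInf {N | arrowsProp n N q E}

section Helpers

open Finset

def dl (x y : ℕ) : ℕ := Nat.log2 (x ^^^ y)

lemma dl_comm (x y : ℕ) : dl x y = dl y x := by
  unfold dl; rw [Nat.xor_comm]

lemma dl_lt {x y : ℕ} (h : x ≠ y) (d : ℕ) : dl x y < d ↔ x / 2 ^ d = y / 2 ^ d := by
  unfold dl
  have h0 : x ^^^ y ≠ 0 := by simpa [Nat.xor_eq_zero_iff] using h
  rw [Nat.log2_lt h0, ← Nat.shiftRight_eq_div_pow, ← Nat.shiftRight_eq_div_pow,
    ← Nat.xor_eq_zero_iff, ← Nat.shiftRight_xor_distrib, Nat.shiftRight_eq_div_pow,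
    Nat.div_eq_zero_iff]
  have : 2 ^ d ≠ 0 := by positivity
  tauto

lemma dl_max {x y z : ℕ} (h1 : x < y) (h2 : y < z) : dl x z = max (dl x y) (dl y z) := by
  have key : ∀ d, dl x z < d ↔ max (dl x y) (dl y z) < d := by
    intro d
    rw [max_lt_iff, dl_lt (by omega), dl_lt (by omega), dl_lt (by omega)]
    have a1 : x / 2 ^ d ≤ y / 2 ^ d := Nat.div_le_div_right h1.le
    have a2 : y / 2 ^ d ≤ z / 2 ^ d := Nat.div_le_div_right h2.le
    omega
  have := key (dl x z); have := key (max (dl x y) (dl y z)); omega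

lemma dl_ne {x y z : ℕ} (h1 : x < y) (h2 : y < z) : dl x y ≠ dl y z := by
  intro h
  have e1 := (dl_lt (x := x) (y := y) (by omega) (dl x y + 1)).1 (by omega)
  have e2 := (dl_lt (x := y) (y := z) (by omega) (dl x y + 1)).1 (by omega)
  have n1 := mt (dl_lt (x := x) (y := y) (by omega) (dl x y)).2 (by omega)
  have n2 := mt (dl_lt (x := y) (y := z) (by omega) (dl x y)).2 (by omega)
  have a1 : x / 2 ^ (dl x y) ≤ y / 2 ^ (dl x y) := Nat.div_le_div_right h1.le
  have a2 : y / 2 ^ (dl x y) ≤ z / 2 ^ (dl x y) := Nat.div_le_div_right h2.le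
  simp only [pow_succ, ← Nat.div_div_eq_div_mul] at e1 e2
  omega

lemma dl_lt_of_lt {x y M : ℕ} (h : x ≠ y) (hx : x < 2 ^ M) (hy : y < 2 ^ M) : dl x y < M := by
  rw [dl_lt h, Nat.div_eq_of_lt hx, Nat.div_eq_of_lt hy]

def dset (e : Finset ℕ) : Finset ℕ := e.offDiag.image (fun p => dl p.1 p.2)

/-- extraction of labels from comb-like families -/
lemma extraction (r : ℕ → ℕ → Prop) (hr : r = (· < ·) ∨ r = (· > ·)) (M k : ℕ)
    (I : Finset ℕ) (B : ℕ → Finset ℕ) (t : ℕ)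
    (hB : ∀ i ∈ I, B i ⊆ range (2 ^ M)) (hcard : ∀ i ∈ I, t + 1 ≤ (B i).card)
    (hdis : ∀ i ∈ I, ∀ j ∈ I, i ≠ j → Disjoint (B i) (B j))
    (hdec : ∀ i ∈ I, ∀ j ∈ I, ∀ x ∈ B i ∪ B j, ∀ y ∈ B i ∪ B j, ∀ z ∈ B i ∪ B j,
      r x y → r y z → dl y z < dl x y) :
    ∃ L : ℕ → Finset ℕ, (∀ i ∈ I, L i ⊆ range M) ∧ (∀ i ∈ I, t ≤ (L i).card) ∧
      (∀ i ∈ I, ∀ j ∈ I, i ≠ j → Disjoint (L i) (L j)) ∧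
      ∀ i ∈ I, ∀ j ∈ I, ∀ S ⊆ L i ∪ L j, S.card = k →
        ∃ e ⊆ B i ∪ B j, e.card = k + 1 ∧ dset e = S := by
  have hirr : ∀ x y, r x y → x ≠ y := by
    rcases hr with rfl | rfl <;> rintro x y h rfl <;> exact lt_irrefl _ h
  have htot : ∀ x y, x ≠ y → r x y ∨ r y x := by
    rcases hr with rfl | rfl <;> intro x y h <;> simp <;> omega
  have htrans : ∀ x y z, r x y → r y z → r x z := by
    rcases hr with rfl | rfl <;> intro x y z h h'
    · exact lt_trans h h'
    · exact lt_trans h' h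
  have hult : ∀ x y z, r x y → r y z → dl x z = max (dl x y) (dl y z) := by
    rcases hr with rfl | rfl <;> intro x y z h h'
    · exact dl_max h h'
    · rw [dl_comm x z, dl_comm x y, dl_comm y z, max_comm]; exact dl_max h' h
  have htop : ∀ s : Finset ℕ, s.Nonempty → ∃ τ ∈ s, ∀ x ∈ s, x ≠ τ → r x τ := by
    rcases hr with rfl | rfl <;> intro s hs
    · refine ⟨s.max' hs, s.max'_mem hs, fun x hx hne => ?_⟩
      exact lt_of_le_of_ne (s.le_max' x hx) hne
    · refine ⟨s.min' hs, s.min'_mem hs, fun x hx hne => ?_⟩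
      exact lt_of_le_of_ne (s.min'_le x hx) (Ne.symm hne)
  have htop' : ∀ i, ∃ τ, i ∈ I → τ ∈ B i ∧ ∀ x ∈ B i, x ≠ τ → r x τ := by
    intro i
    by_cases hi : i ∈ I
    · have : (B i).Nonempty := by
        rw [← Finset.card_pos]; have := hcard i hi; omega
      obtain ⟨τ, h1, h2⟩ := htop _ this
      exact ⟨τ, fun _ => ⟨h1, h2⟩⟩
    · exact ⟨0, fun h => absurd h hi⟩
  choose τ hτ using htop'
  have hlab : ∀ i ∈ I, ∀ j ∈ I, ∀ x ∈ B i ∪ B j, ∀ y ∈ B i ∪ B j, ∀ z ∈ B i ∪ B j,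
      r x y → r x z → dl x y = dl x z := by
    intro i hi j hj x hx y hy z hz hxy hxz
    by_cases hyz : y = z
    · rw [hyz]
    rcases htot y z hyz with h | h
    · have := hdec i hi j hj x hx y hy z hz hxy h
      rw [hult x y z hxy h]; omega
    · have := hdec i hi j hj x hx z hz y hy hxz h
      rw [hult x z y hxz h]; omega
  have hmono : ∀ i ∈ I, ∀ j ∈ I, ∀ x ∈ B i, x ≠ τ i → ∀ y ∈ B j, y ≠ τ j → r x y →
      dl y (τ j) < dl x (τ i) := by
    intro i hi j hj x hx hxt y hy hyt hxy
    have h1 := hlab i hi j hj x (by simp [hx]) y (by simp [hy]) (τ i)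
      (by simp [(hτ i hi).1]) hxy ((hτ i hi).2 x hx hxt)
    have h2 := hdec i hi j hj x (by simp [hx]) y (by simp [hy]) (τ j)
      (by simp [(hτ j hj).1]) hxy ((hτ j hj).2 y hy hyt)
    omega
  have hinj : ∀ i ∈ I, ∀ j ∈ I, ∀ x ∈ B i, x ≠ τ i → ∀ y ∈ B j, y ≠ τ j →
      dl x (τ i) = dl y (τ j) → x = y := by
    intro i hi j hj x hx hxt y hy hyt h
    by_contra hne
    rcases htot x y hne with h' | h'
    · have := hmono i hi j hj x hx hxt y hy hyt h'; omega
    · have := hmono j hj i hi y hy hyt x hx hxt h'; omega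
  refine ⟨fun i => ((B i).erase (τ i)).image (fun x => dl x (τ i)), ?_, ?_, ?_, ?_⟩
  · intro i hi v hv
    simp only [mem_image, mem_erase] at hv
    obtain ⟨x, ⟨hx1, hx2⟩, rfl⟩ := hv
    exact mem_range.2 (dl_lt_of_lt hx1 (mem_range.1 (hB i hi hx2))
      (mem_range.1 (hB i hi (hτ i hi).1)))
  · intro i hi
    rw [card_image_of_injOn, card_erase_of_mem (hτ i hi).1]
    · have := hcard i hi; omega
    · intro x hx y hy h
      simp only [coe_erase, Set.mem_sdiff, mem_coe, Set.mem_singleton_iff] at hx hy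
      exact hinj i hi i hi x hx.1 hx.2 y hy.1 hy.2 h
  · intro i hi j hj hij
    rw [Finset.disjoint_left]
    intro v hv hv'
    simp only [mem_image, mem_erase] at hv hv'
    obtain ⟨x, ⟨hx1, hx2⟩, rfl⟩ := hv
    obtain ⟨y, ⟨hy1, hy2⟩, h⟩ := hv'
    have := hinj i hi j hj x hx2 hx1 y hy2 hy1 h.symm
    subst this
    exact Finset.disjoint_left.1 (hdis i hi j hj hij) hx2 hy2
  · intro i hi j hj S hS hSk
    -- pick preimages
    have hpre : ∀ v : ℕ, ∃ x, v ∈ S → (x ∈ B i ∪ B j) ∧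
        (∀ w, w ∈ B i ∪ B j → r x w → dl x w = v) ∧ (r x (τ i) ∨ r x (τ j)) := by
      intro v
      by_cases hv : v ∈ S
      · have := hS hv
        simp only [mem_union, mem_image, mem_erase] at this
        rcases this with ⟨x, ⟨hx1, hx2⟩, rfl⟩ | ⟨x, ⟨hx1, hx2⟩, rfl⟩
        · refine ⟨x, fun _ => ⟨by simp [hx2], fun w hw hxw => ?_, Or.inl ((hτ i hi).2 x hx2 hx1)⟩⟩
          exact hlab i hi j hj x (by simp [hx2]) w hw (τ i) (by simp [(hτ i hi).1]) hxw
            ((hτ i hi).2 x hx2 hx1)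
        · refine ⟨x, fun _ => ⟨by simp [hx2], fun w hw hxw => ?_, Or.inr ((hτ j hj).2 x hx2 hx1)⟩⟩
          exact hlab i hi j hj x (by simp [hx2]) w hw (τ j) (by simp [(hτ j hj).1]) hxw
            ((hτ j hj).2 x hx2 hx1)
      · exact ⟨0, fun h => absurd h hv⟩
    choose p hp using hpre
    obtain ⟨σ, hσ, hσ'⟩ : ∃ σ ∈ B i ∪ B j, ∀ x, (r x (τ i) ∨ r x (τ j)) → r x σ := by
      obtain ⟨σ, h1, h2⟩ := htop {τ i, τ j} (by simp)
      refine ⟨σ, ?_, ?_⟩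
      · simp only [mem_insert, mem_singleton] at h1
        rcases h1 with rfl | rfl
        · simp [(hτ i hi).1]
        · simp [(hτ j hj).1]
      · rintro x (h | h)
        · by_cases h' : τ i = σ
          · rwa [← h']
          · exact htrans _ _ _ h (h2 _ (by simp) h')
        · by_cases h' : τ j = σ
          · rwa [← h']
          · exact htrans _ _ _ h (h2 _ (by simp) h')
    have hpσ : ∀ v ∈ S, r (p v) σ := fun v hv => hσ' _ (hp v hv).2.2
    have hpl : ∀ v ∈ S, dl (p v) σ = v := fun v hv => (hp v hv).2.1 σ hσ (hpσ v hv)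
    have hpinj : Set.InjOn p S := by
      intro v hv w hw h
      rw [← hpl v hv, ← hpl w hw, h]
    refine ⟨insert σ (S.image p), ?_, ?_, ?_⟩
    · intro x hx
      simp only [mem_insert, mem_image] at hx
      rcases hx with rfl | ⟨v, hv, rfl⟩
      · exact hσ
      · exact (hp v hv).1
    · rw [card_insert_of_notMem, card_image_of_injOn hpinj, hSk]
      simp only [mem_image, not_exists, not_and]
      intro v hv h
      exact hirr _ _ (hpσ v hv) h
    · ext v
      simp only [dset, mem_image, mem_offDiag, mem_insert, Prod.exists]
      constructor
      · rintro ⟨x, y, ⟨hx, hy, hne⟩, rfl⟩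
        rcases hx with rfl | ⟨v, hv, rfl⟩
        · rcases hy with rfl | ⟨w, hw, rfl⟩
          · exact absurd rfl hne
          · rw [dl_comm, hpl w hw]; exact hw
        · rcases hy with rfl | ⟨w, hw, rfl⟩
          · rw [hpl v hv]; exact hv
          · rcases htot _ _ hne with h | h
            · rw [(hp v hv).2.1 _ (hp w hw).1 h]; exact hv
            · rw [dl_comm, (hp w hw).2.1 _ (hp v hv).1 h]; exact hw
      · intro hv
        exact ⟨p v, σ, ⟨Or.inr ⟨v, hv, rfl⟩, Or.inl rfl, hirr _ _ (hpσ v hv)⟩, hpl v hv⟩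

def Good {κ : Type} (k T m t : ℕ) (χ : Finset ℕ → κ) : Prop :=
  ∀ (I : Finset ℕ) (A : ℕ → Finset ℕ), m ≤ I.card → (∀ i ∈ I, A i ⊆ range T) →
    (∀ i ∈ I, t ≤ (A i).card) → (∀ i ∈ I, ∀ j ∈ I, i ≠ j → Disjoint (A i) (A j)) →
    ∀ c, ¬ (∀ i ∈ I, ∀ j ∈ I, ∀ e ⊆ A i ∪ A j, e.card = k → χ e = c)

def DecSet (e : Finset ℕ) : Prop :=
  ∀ x ∈ e, ∀ y ∈ e, ∀ z ∈ e, x < y → y < z → dl y z < dl x y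

def IncSet (e : Finset ℕ) : Prop :=
  ∀ x ∈ e, ∀ y ∈ e, ∀ z ∈ e, x < y → y < z → dl x y < dl y z

lemma card_triple {x y z : ℕ} (h1 : x < y) (h2 : y < z) : ({x, y, z} : Finset ℕ).card = 3 := by
  rw [card_insert_of_notMem, card_insert_of_notMem, card_singleton]
  · simp; omega
  · simp; omega

/-- combining monotone families with a good coloring one uniformity lower -/
lemma good_contra {κ : Type} {k M m t : ℕ} {φ : Finset ℕ → κ} (h : Good k M m t φ)
    (I : Finset ℕ) (B : ℕ → Finset ℕ) (hm : m ≤ I.card)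
    (hB : ∀ i ∈ I, B i ⊆ range (2 ^ M)) (hcard : ∀ i ∈ I, t + 1 ≤ (B i).card)
    (hdis : ∀ i ∈ I, ∀ j ∈ I, i ≠ j → Disjoint (B i) (B j))
    (hmon : (∀ i ∈ I, ∀ j ∈ I, DecSet (B i ∪ B j)) ∨ (∀ i ∈ I, ∀ j ∈ I, IncSet (B i ∪ B j)))
    (c : κ) (hc : ∀ i ∈ I, ∀ j ∈ I, ∀ e ⊆ B i ∪ B j, e.card = k + 1 → φ (dset e) = c) :
    False := by
  have : ∃ r : ℕ → ℕ → Prop, (r = (· < ·) ∨ r = (· > ·)) ∧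
      (∀ i ∈ I, ∀ j ∈ I, ∀ x ∈ B i ∪ B j, ∀ y ∈ B i ∪ B j, ∀ z ∈ B i ∪ B j,
      r x y → r y z → dl y z < dl x y) := by
    rcases hmon with hmon | hmon
    · exact ⟨_, Or.inl rfl, fun i hi j hj x hx y hy z hz h1 h2 =>
        hmon i hi j hj x hx y hy z hz h1 h2⟩
    · refine ⟨_, Or.inr rfl, fun i hi j hj x hx y hy z hz h1 h2 => ?_⟩
      have := hmon i hi j hj z hz y hy x hx h2 h1
      rwa [dl_comm y z, dl_comm x y]
  obtain ⟨r, hr, hdec⟩ := this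
  obtain ⟨L, hL1, hL2, hL3, hL4⟩ := extraction r hr M k I B t hB hcard hdis hdec
  refine h I L hm hL1 hL2 hL3 c ?_
  intro i hi j hj S hS hSk
  obtain ⟨e, he, hek, rfl⟩ := hL4 i hi j hj S hS hSk
  exact hc i hi j hj e he hek

open Classical in
lemma step3 {M m : ℕ} {φ : Finset ℕ → Bool} (h : Good 2 M m 1 φ) :
    ∃ χ : Finset ℕ → Fin 4, Good 3 (2 ^ M) m 2 χ := by
  refine ⟨fun e => if DecSet e then (if φ (dset e) = true then 0 else 1)
    else (if φ (dset e) = true then 2 else 3), ?_⟩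
  intro I A hm hA hcard hdis c hc
  beta_reduce at hc
  refine good_contra h I A hm hA hcard hdis ?_ (decide (c = 0 ∨ c = 2)) ?_
  · by_cases hc2 : c = 0 ∨ c = 1
    · left
      intro i hi j hj x hx y hy z hz hxy hyz
      have := hc i hi j hj {x, y, z} (by
        intro w hw; simp only [mem_insert, mem_singleton] at hw
        rcases hw with rfl | rfl | rfl <;> assumption) (card_triple hxy hyz)
      have hd : DecSet {x, y, z} := by
        by_contra hd
        rw [if_neg hd] at this
        subst this
        split_ifs at hc2 <;> simp at hc2
      exact hd x (by simp) y (by simp) z (by simp) hxy hyz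
    · right
      intro i hi j hj x hx y hy z hz hxy hyz
      have := hc i hi j hj {x, y, z} (by
        intro w hw; simp only [mem_insert, mem_singleton] at hw
        rcases hw with rfl | rfl | rfl <;> assumption) (card_triple hxy hyz)
      by_contra hlt
      have hd : DecSet {x, y, z} := by
        intro a ha b hb d hd hab hbd
        simp only [mem_insert, mem_singleton] at ha hb hd
        have := dl_ne hxy hyz
        have h3 : a = x ∧ b = y ∧ d = z := by omega
        obtain ⟨rfl, rfl, rfl⟩ := h3
        omega
      rw [if_pos hd] at this
      subst this
      split_ifs at hc2 <;> simp at hc2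
  · intro i hi j hj e he hek
    have := hc i hi j hj e he hek
    clear hc
    subst this
    split_ifs <;> simp_all

lemma exists_bottom (s : Finset ℕ) (a : ℕ) (ha : a ≤ s.card) :
    ∃ L ⊆ s, L.card = a ∧ ∀ x ∈ L, ∀ y ∈ s \ L, x < y := by
  induction a with
  | zero => exact ⟨∅, by simp, by simp, by simp⟩
  | succ a ih =>
    obtain ⟨L, h1, h2, h3⟩ := ih (by omega)
    have hne : (s \ L).Nonempty := by
      rw [← card_pos, card_sdiff_of_subset h1]; omega
    have hm := (s \ L).min'_mem hne
    rw [mem_sdiff] at hm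
    refine ⟨insert ((s \ L).min' hne) L, ?_, ?_, ?_⟩
    · intro x hx
      rcases mem_insert.1 hx with rfl | hx
      · exact hm.1
      · exact h1 hx
    · rw [card_insert_of_notMem hm.2, h2]
    · intro x hx y hy
      simp only [mem_sdiff, mem_insert, not_or] at hy
      have hy' : y ∈ s \ L := mem_sdiff.2 ⟨hy.1, hy.2.2⟩
      rcases mem_insert.1 hx with rfl | hx
      · exact lt_of_le_of_ne (min'_le _ _ hy') (Ne.symm hy.2.1)
      · exact h3 x hx y hy'

lemma dichotomy (P : ℕ → ℕ → ℕ → Prop) (m t : ℕ) (I : Finset ℕ) (A : ℕ → Finset ℕ)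
    (hI : 2 * m ≤ I.card) (hcard : ∀ i ∈ I, 2 * t + 4 ≤ (A i).card)
    (hrule : ∀ i ∈ I, ∀ j ∈ I, ∀ x ∈ A i ∪ A j, ∀ y ∈ A i ∪ A j, ∀ z ∈ A i ∪ A j,
      ∀ w ∈ A i ∪ A j, x < y → y < z → z < w → P x y z → P y z w) :
    ∃ J ⊆ I, ∃ B : ℕ → Finset ℕ, m ≤ J.card ∧ (∀ i ∈ J, B i ⊆ A i ∧ t + 1 ≤ (B i).card) ∧
      ((∀ i ∈ J, ∀ j ∈ J, ∀ x ∈ B i ∪ B j, ∀ y ∈ B i ∪ B j, ∀ z ∈ B i ∪ B j,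
        x < y → y < z → P x y z) ∨
       (∀ i ∈ J, ∀ j ∈ J, ∀ x ∈ B i ∪ B j, ∀ y ∈ B i ∪ B j, ∀ z ∈ B i ∪ B j,
        x < y → y < z → ¬ P x y z)) := by
  classical
  have hL : ∀ i, ∃ L, i ∈ I → L ⊆ A i ∧ L.card = t + 3 ∧ ∀ x ∈ L, ∀ y ∈ A i \ L, x < y := by
    intro i
    by_cases hi : i ∈ I
    · obtain ⟨L, h⟩ := exists_bottom (A i) (t + 3) (by have := hcard i hi; omega)
      exact ⟨L, fun _ => h⟩
    · exact ⟨∅, fun h => absurd h hi⟩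
  choose L hL using hL
  have hK : ∀ i, ∃ K, i ∈ I → K ⊆ L i ∧ K.card = t + 1 ∧ ∀ x ∈ K, ∀ y ∈ L i \ K, x < y := by
    intro i
    by_cases hi : i ∈ I
    · obtain ⟨K, h⟩ := exists_bottom (L i) (t + 1) (by have := (hL i hi).2.1; omega)
      exact ⟨K, fun _ => h⟩
    · exact ⟨∅, fun h => absurd h hi⟩
  choose K hK using hK
  set Q : ℕ → Prop := fun i => ∃ p ∈ L i, ∃ q ∈ L i, ∃ s ∈ L i, p < q ∧ q < s ∧ P p q s with hQ
  have hsplit := Finset.card_filter_add_card_filter_not (s := I) Q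
  by_cases hcase : m ≤ (I.filter Q).card
  · refine ⟨I.filter Q, filter_subset _ _, fun i => A i \ L i, hcase, ?_, Or.inl ?_⟩
    · intro i hi
      have hi := (mem_filter.1 hi).1
      refine ⟨sdiff_subset, ?_⟩
      rw [card_sdiff_of_subset (hL i hi).1, (hL i hi).2.1]
      have := hcard i hi; omega
    · have key : ∀ i ∈ I.filter Q, ∀ j ∈ I.filter Q, ∀ x ∈ A i \ L i, ∀ y ∈ A i ∪ A j,
          ∀ z ∈ A i ∪ A j, x < y → y < z → P x y z := by
        intro i hi j hj x hx y hy z hz hxy hyz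
        obtain ⟨hi, p, hp, q, hq, s, hs, hpq, hqs, hP⟩ := mem_filter.1 hi
        have hj := (mem_filter.1 hj).1
        have hsx := (hL i hi).2.2 s hs x hx
        have up : ∀ w, w ∈ L i → w ∈ A i ∪ A j := fun w hw => by
          simp [(hL i hi).1 hw]
        have hxm : x ∈ A i ∪ A j := by simp [(mem_sdiff.1 hx).1]
        have r1 := hrule i hi j hj p (up p hp) q (up q hq) s (up s hs) x hxm hpq hqs hsx hP
        have r2 := hrule i hi j hj q (up q hq) s (up s hs) x hxm y hy hqs hsx hxy r1
        exact hrule i hi j hj s (up s hs) x hxm y hy z hz hsx hxy hyz r2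
      intro i hi j hj x hx y hy z hz hxy hyz
      have hsub : ∀ w, w ∈ A i \ L i ∪ A j \ L j → w ∈ A i ∪ A j := by
        intro w hw
        simp only [mem_union, mem_sdiff] at hw ⊢; tauto
      rcases mem_union.1 hx with hx | hx
      · exact key i hi j hj x hx y (hsub y hy) z (hsub z hz) hxy hyz
      · exact key j hj i hi x hx y (union_comm (A i) (A j) ▸ hsub y hy) z
          (union_comm (A i) (A j) ▸ hsub z hz) hxy hyz
  · refine ⟨I.filter (fun i => ¬ Q i), filter_subset _ _, K, by omega, ?_, Or.inr ?_⟩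
    · intro i hi
      have hi := (mem_filter.1 hi).1
      exact ⟨(hK i hi).1.trans (hL i hi).1, (hK i hi).2.1.ge⟩
    · have key : ∀ i ∈ I.filter (fun i => ¬ Q i), ∀ j ∈ I.filter (fun i => ¬ Q i),
          ∀ z ∈ K i, ∀ x ∈ A i ∪ A j, ∀ y ∈ A i ∪ A j, x < y → y < z → ¬ P x y z := by
        intro i hi j hj z hz x hx y hy hxy hyz hP
        obtain ⟨hi, hnQ⟩ := mem_filter.1 hi
        have hj := (mem_filter.1 hj).1
        have h2 : 1 < (L i \ K i).card := by
          rw [card_sdiff_of_subset (hK i hi).1, (hL i hi).2.1, (hK i hi).2.1]; omega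
        obtain ⟨a, ha, b, hb, hab⟩ : ∃ a ∈ L i \ K i, ∃ b ∈ L i \ K i, a < b := by
          obtain ⟨a, ha, b, hb, hne⟩ := one_lt_card.1 h2
          rcases lt_or_gt_of_ne hne with h | h
          · exact ⟨a, ha, b, hb, h⟩
          · exact ⟨b, hb, a, ha, h⟩
        have hza := (hK i hi).2.2 z hz a ha
        have up : ∀ w, w ∈ L i → w ∈ A i ∪ A j := fun w hw => by
          simp [(hL i hi).1 hw]
        have hzL := (hK i hi).1 hz
        have haL := (mem_sdiff.1 ha).1
        have hbL := (mem_sdiff.1 hb).1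
        have r1 := hrule i hi j hj x hx y hy z (up z hzL) a (up a haL) hxy hyz hza hP
        have r2 := hrule i hi j hj y hy z (up z hzL) a (up a haL) b (up b hbL) hyz hza hab r1
        exact hnQ ⟨z, hzL, a, haL, b, hbL, hza, hab, r2⟩
      intro i hi j hj x hx y hy z hz hxy hyz
      have hsub : ∀ w, w ∈ K i ∪ K j → w ∈ A i ∪ A j := by
        intro w hw
        have h1 := (hK i (mem_filter.1 hi).1).1.trans (hL i (mem_filter.1 hi).1).1
        have h2 := (hK j (mem_filter.1 hj).1).1.trans (hL j (mem_filter.1 hj).1).1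
        exact union_subset_union h1 h2 hw
      rcases mem_union.1 hz with hz | hz
      · exact key i hi j hj z hz x (hsub x hx) y (hsub y hy) hxy hyz
      · exact key j hj i hi z hz x (union_comm (A i) (A j) ▸ hsub x hx) y
          (union_comm (A i) (A j) ▸ hsub y hy) hxy hyz

def FirstInc (e : Finset ℕ) : Prop :=
  ∃ x ∈ e, ∃ y ∈ e, ∃ z ∈ e, x < y ∧ y < z ∧ (∀ w ∈ e, w = x ∨ w = y ∨ z ≤ w) ∧ dl x y < dl y z

open Classical in
lemma stepk {k M m t : ℕ} (hk : 3 ≤ k) {χ : Finset ℕ → Fin 4} (h : Good k M m t χ) :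
    ∃ χ' : Finset ℕ → Fin 4, Good (k + 1) (2 ^ M) (2 * m) (2 * t + 4 + k) χ' := by
  refine ⟨fun e => if DecSet e ∨ IncSet e then χ (dset e) else if FirstInc e then 1 else 0, ?_⟩
  intro I A hm hA hcard hdis c hc
  -- trimmed sets
  have hT : ∀ i, ∃ T, i ∈ I → T ⊆ A i ∧ T.card = 2 * t + 4 ∧ ∀ x ∈ T, ∀ y ∈ A i \ T, x < y := by
    intro i
    by_cases hi : i ∈ I
    · obtain ⟨K, h⟩ := exists_bottom (A i) (2 * t + 4) (by have := hcard i hi; omega)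
      exact ⟨K, fun _ => h⟩
    · exact ⟨∅, fun h => absurd h hi⟩
  choose T hT using hT
  -- extension of four points to an edge with these as the first four
  have hext : ∀ i ∈ I, ∀ j ∈ I, ∀ x ∈ T i ∪ T j, ∀ y ∈ T i ∪ T j, ∀ z ∈ T i ∪ T j,
      ∀ w ∈ T i ∪ T j, x < y → y < z → z < w → ∃ e ⊆ A i ∪ A j, e.card = k + 1 ∧
        x ∈ e ∧ y ∈ e ∧ z ∈ e ∧ w ∈ e ∧ ∀ v ∈ e, v = x ∨ v = y ∨ z ≤ v := by
    intro i hi j hj x hx y hy z hz w hw hxy hyz hzw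
    obtain ⟨F, hF1, hF2, hF3⟩ : ∃ F ⊆ A i ∪ A j, k ≤ F.card ∧ ∀ v ∈ F, w < v := by
      rcases mem_union.1 hw with h' | h'
      · refine ⟨A i \ T i, sdiff_subset.trans subset_union_left, ?_, (hT i hi).2.2 w h'⟩
        rw [card_sdiff_of_subset (hT i hi).1, (hT i hi).2.1]
        have := hcard i hi; omega
      · refine ⟨A j \ T j, sdiff_subset.trans subset_union_right, ?_, (hT j hj).2.2 w h'⟩
        rw [card_sdiff_of_subset (hT j hj).1, (hT j hj).2.1]
        have := hcard j hj; omega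
    obtain ⟨F', hF', hF'c⟩ := exists_subset_card_eq (s := F) (n := k - 3) (by omega)
    have hsub : ∀ v, v ∈ T i ∪ T j → v ∈ A i ∪ A j := fun v hv =>
      union_subset_union (hT i hi).1 (hT j hj).1 hv
    refine ⟨insert x (insert y (insert z (insert w F'))), ?_, ?_, by simp, by simp, by simp,
      by simp, ?_⟩
    · intro v hv
      simp only [mem_insert] at hv
      rcases hv with rfl | rfl | rfl | rfl | hv
      · exact hsub _ hx
      · exact hsub _ hy
      · exact hsub _ hz
      · exact hsub _ hw
      · exact hF1 (hF' hv)
    · have n1 : w ∉ F' := fun h' => lt_irrefl _ (hF3 w (hF' h'))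
      have n2 : z ∉ F' := fun h' => by have := hF3 z (hF' h'); omega
      have n3 : y ∉ F' := fun h' => by have := hF3 y (hF' h'); omega
      have n4 : x ∉ F' := fun h' => by have := hF3 x (hF' h'); omega
      rw [card_insert_of_notMem, card_insert_of_notMem, card_insert_of_notMem,
        card_insert_of_notMem n1, hF'c]
      · omega
      · simp [n2]; omega
      · simp [n3]; omega
      · simp [n4]; omega
    · intro v hv
      simp only [mem_insert] at hv
      rcases hv with rfl | rfl | rfl | rfl | hv
      · simp
      · simp
      · simp
      · right; right; omega
      · have := hF3 v (hF' hv); right; right; omega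
  have final : ∀ J ⊆ I, ∀ B : ℕ → Finset ℕ, m ≤ J.card →
      (∀ i ∈ J, B i ⊆ T i ∧ t + 1 ≤ (B i).card) →
      ((∀ i ∈ J, ∀ j ∈ J, DecSet (B i ∪ B j)) ∨ (∀ i ∈ J, ∀ j ∈ J, IncSet (B i ∪ B j))) →
      False := by
    intro J hJ B hmJ hB hmon
    have hBA : ∀ i ∈ J, B i ⊆ A i := fun i hi => (hB i hi).1.trans (hT i (hJ hi)).1
    refine good_contra h J B hmJ (fun i hi => (hBA i hi).trans (hA i (hJ hi)))
      (fun i hi => (hB i hi).2) (fun i hi j hj hij =>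
        (hdis i (hJ hi) j (hJ hj) hij).mono (hBA i hi) (hBA j hj)) hmon c ?_
    intro i hi j hj e he hek
    have := hc i (hJ hi) j (hJ hj) e (he.trans (union_subset_union (hBA i hi) (hBA j hj))) hek
    have hde : DecSet e ∨ IncSet e := by
      rcases hmon with hmon | hmon
      · left
        intro x hx y hy z hz
        exact hmon i hi j hj x (he hx) y (he hy) z (he hz)
      · right
        intro x hx y hy z hz
        exact hmon i hi j hj x (he hx) y (he hy) z (he hz)
    simpa [hde] using this
  by_cases hc0 : c = 0
  · -- every edge starting increasing is increasing
    obtain ⟨J, hJ, B, hmJ, hB, hor⟩ := dichotomy (fun x y z => dl x y < dl y z) m t I T hm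
      (fun i hi => (hT i hi).2.1.ge) (by
        intro i hi j hj x hx y hy z hz w hw hxy hyz hzw hP
        obtain ⟨e, he, hek, hxe, hye, hze, hwe, hlow⟩ :=
          hext i hi j hj x hx y hy z hz w hw hxy hyz hzw
        have hce := hc i hi j hj e he hek
        have hfi : FirstInc e := ⟨x, hxe, y, hye, z, hze, hxy, hyz, hlow, hP⟩
        by_cases hmon : DecSet e ∨ IncSet e
        · rcases hmon with hd | hd
          · have := hd x hxe y hye z hze hxy hyz; omega
          · exact hd y hye z hze w hwe hyz hzw
        · simp [hmon, hfi, hc0] at hce)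
    refine final J hJ B hmJ hB ?_
    rcases hor with hor | hor
    · right; exact hor
    · left
      intro i hi j hj x hx y hy z hz hxy hyz
      have := hor i hi j hj x hx y hy z hz hxy hyz
      have := dl_ne hxy hyz
      omega
  · obtain ⟨J, hJ, B, hmJ, hB, hor⟩ := dichotomy (fun x y z => dl y z < dl x y) m t I T hm
      (fun i hi => (hT i hi).2.1.ge) (by
        intro i hi j hj x hx y hy z hz w hw hxy hyz hzw hP
        obtain ⟨e, he, hek, hxe, hye, hze, hwe, hlow⟩ :=
          hext i hi j hj x hx y hy z hz w hw hxy hyz hzw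
        have hce := hc i hi j hj e he hek
        have hfi : ¬ FirstInc e := by
          rintro ⟨x', hx', y', hy', z', hz', h1, h2, h3, h4⟩
          have a1 := h3 x hxe
          have a2 := h3 y hye
          have a3 := h3 z hze
          have b1 := hlow x' hx'
          have b2 := hlow y' hy'
          have b3 := hlow z' hz'
          have h5 : x' = x ∧ y' = y ∧ z' = z := by omega
          obtain ⟨rfl, rfl, rfl⟩ := h5
          omega
        by_cases hmon : DecSet e ∨ IncSet e
        · rcases hmon with hd | hd
          · exact hd y hye z hze w hwe hyz hzw
          · have := hd x hxe y hye z hze hxy hyz; omega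
        · simp only [hmon, hfi, if_false] at hce
          exact absurd hce.symm hc0)
    refine final J hJ B hmJ hB ?_
    rcases hor with hor | hor
    · left; exact hor
    · right
      intro i hi j hj x hx y hy z hz hxy hyz
      have := hor i hi j hj x hx y hy z hz hxy hyz
      have := dl_ne hxy hyz
      omega

lemma propB {α : Type} [Fintype α] [DecidableEq α] (𝓕 : Finset (Finset α)) (K : ℕ)
    (hF : ∀ F ∈ 𝓕, F.card = K) (h : 2 * 𝓕.card < 2 ^ K) :
    ∃ f : α → Bool, ∀ F ∈ 𝓕, ∀ b, ∃ x ∈ F, f x ≠ b := by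
  by_contra hcon
  push Not at hcon
  obtain ⟨F0, hF0, -⟩ := hcon (fun _ => true)
  have hKα : K ≤ Fintype.card α := by
    rw [← hF F0 hF0]; exact card_le_univ _
  let bad : Finset α × Bool → Finset (α → Bool) := fun p =>
    Fintype.piFinset (fun x => if x ∈ p.1 then {p.2} else univ)
  have hbad : ∀ p ∈ 𝓕 ×ˢ (univ : Finset Bool), (bad p).card ≤ 2 ^ (Fintype.card α - K) := by
    intro p hp
    have hp1 := hF p.1 (mem_product.1 hp).1
    simp only [bad, Fintype.card_piFinset]
    have : ∀ x : α, (if x ∈ p.1 then ({p.2} : Finset Bool) else univ).card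
        = if x ∈ p.1 then 1 else 2 := by
      intro x; split_ifs <;> simp
    simp only [this]
    rw [Finset.prod_ite]
    simp only [prod_const_one, one_mul, prod_const]
    have h3 : (univ.filter (fun x => x ∉ p.1)).card = Fintype.card α - K := by
      rw [← hp1, ← card_compl]; congr 1; ext x; simp
    rw [h3]
  have hcover : (univ : Finset (α → Bool)) ⊆ (𝓕 ×ˢ (univ : Finset Bool)).biUnion bad := by
    intro f _
    obtain ⟨F, hF1, b, hb⟩ := hcon f
    refine mem_biUnion.2 ⟨(F, b), by simp [hF1], ?_⟩
    simp only [bad, Fintype.mem_piFinset]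
    intro x
    split_ifs with hx
    · simp [hb x hx]
    · simp
  have h1 := card_le_card hcover
  have h2 := card_biUnion_le_card_mul _ _ _ hbad
  rw [card_product] at h2
  have h3 : (univ : Finset (α → Bool)).card = 2 ^ K * 2 ^ (Fintype.card α - K) := by
    rw [card_univ, Fintype.card_fun, Fintype.card_bool, ← pow_add]; congr 1; omega
  have h4 : (univ : Finset Bool).card = 2 := rfl
  rw [h4] at h2
  have h5 : 0 < 2 ^ (Fintype.card α - K) := by positivity
  nlinarith

lemma base (p : ℕ) : ∃ φ : Finset ℕ → Bool, Good 2 (2 ^ p) (4 * p + 4) 1 φ := by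
  set m := 4 * p + 4 with hm
  obtain ⟨f, hf⟩ := propB (α := Finset (Fin (2 ^ p)))
    (((univ : Finset (Fin (2 ^ p))).powersetCard m).image (fun S => S.powersetCard 2))
    (m.choose 2) (by
      intro F hF
      obtain ⟨S, hS, rfl⟩ := mem_image.1 hF
      rw [card_powersetCard, (mem_powersetCard.1 hS).2]) (by
      have h1 : (((univ : Finset (Fin (2 ^ p))).powersetCard m).image
          (fun S => S.powersetCard 2)).card ≤ (2 ^ p) ^ m := by
        refine card_image_le.trans ?_
        rw [card_powersetCard, card_univ, Fintype.card_fin]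
        exact Nat.choose_le_pow _ _
      have h2 : m.choose 2 = (2 * p + 2) * (4 * p + 3) := by
        rw [Nat.choose_two_right, hm]
        have : (4 * p + 4) * (4 * p + 4 - 1) = 2 * ((2 * p + 2) * (4 * p + 3)) := by
          rw [show 4 * p + 4 - 1 = 4 * p + 3 by omega]; ring
        rw [this]; simp
      calc _ ≤ 2 * (2 ^ p) ^ m := by omega
        _ = 2 ^ (p * m + 1) := by rw [← pow_mul, pow_succ]; ring
        _ < 2 ^ (m.choose 2) := by
          apply Nat.pow_lt_pow_right (by norm_num)
          rw [h2, hm]; nlinarith)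
  refine ⟨fun e => f (univ.filter (fun i : Fin (2 ^ p) => (i : ℕ) ∈ e)), ?_⟩
  intro I A hI hA hcard hdis c hc
  beta_reduce at hc
  obtain ⟨J, hJ, hJm⟩ := exists_subset_card_eq hI
  have ha : ∀ i, ∃ a : Fin (2 ^ p), i ∈ I → (a : ℕ) ∈ A i := by
    intro i
    by_cases hi : i ∈ I
    · have : (A i).Nonempty := by rw [← card_pos]; exact hcard i hi
      obtain ⟨x, hx⟩ := this
      exact ⟨⟨x, mem_range.1 (hA i hi hx)⟩, fun _ => hx⟩
    · exact ⟨⟨0, by positivity⟩, fun h => absurd h hi⟩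
  choose a ha using ha
  have hinj : Set.InjOn a J := by
    intro i hi j hj hij
    by_contra hne
    have h1 := ha i (hJ hi)
    have h2 := ha j (hJ hj)
    rw [hij] at h1
    exact Finset.disjoint_left.1 (hdis i (hJ hi) j (hJ hj) hne) h1 h2
  obtain ⟨x, hx, hne⟩ := hf ((J.image a).powersetCard 2) (mem_image.2 ⟨J.image a, by
    rw [mem_powersetCard]; exact ⟨subset_univ _, by rw [card_image_of_injOn hinj, hJm]⟩, rfl⟩) c
  rw [mem_powersetCard] at hx
  obtain ⟨u, v, huv, rfl⟩ := card_eq_two.1 hx.2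
  obtain ⟨i, hi, hi'⟩ := mem_image.1 (hx.1 (mem_insert_self u {v}))
  obtain ⟨j, hj, hj'⟩ := mem_image.1 (hx.1 (mem_insert_of_mem (mem_singleton_self v)))
  apply hne
  have := hc i (hJ hi) j (hJ hj) {(u : ℕ), (v : ℕ)} (by
    intro w hw
    simp only [mem_insert, mem_singleton] at hw
    rcases hw with rfl | rfl
    · rw [← hi']; exact mem_union_left _ (ha i (hJ hi))
    · rw [← hj']; exact mem_union_right _ (ha j (hJ hj))) (by
    rw [card_pair]; exact fun h => huv (Fin.ext h))
  rw [← this]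
  congr 1
  ext w
  simp [Fin.ext_iff]

/-- finite hypergraph Ramsey theorem -/
lemma ramsey_exists (k : ℕ) : ∀ n : ℕ, ∃ N : ℕ, ∀ X : Finset ℕ, N ≤ X.card →
    ∀ χ : Finset ℕ → Fin 4, ∃ S ⊆ X, S.card = n ∧ ∃ c, ∀ e ⊆ S, e.card = k → χ e = c := by
  induction k with
  | zero =>
    intro n
    refine ⟨n, fun X hX χ => ?_⟩
    obtain ⟨S, hS, hSn⟩ := exists_subset_card_eq hX
    refine ⟨S, hS, hSn, χ ∅, fun e _ he => ?_⟩
    rw [card_eq_zero.1 he]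
  | succ k ih =>
    have hQ : ∀ l : ℕ, ∃ N : ℕ, ∀ X : Finset ℕ, N ≤ X.card → ∀ χ : Finset ℕ → Fin 4,
        ∃ S ⊆ X, S.card = l ∧ ∃ col : ℕ → Fin 4, ∀ e ⊆ S, e.card = k + 1 →
          ∀ x ∈ e, (∀ y ∈ e, x ≤ y) → χ e = col x := by
      intro l
      induction l with
      | zero =>
        refine ⟨0, fun X _ χ => ⟨∅, by simp, by simp, fun _ => 0, ?_⟩⟩
        intro e he hc
        rw [subset_empty.1 he] at hc
        simp at hc
      | succ l ihl =>
        obtain ⟨N1, hN1⟩ := ihl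
        obtain ⟨N2, hN2⟩ := ih N1
        refine ⟨N2 + 1, fun X hX χ => ?_⟩
        have hne : X.Nonempty := by rw [← card_pos]; omega
        set a := X.min' hne with ha
        have haX : a ∈ X := X.min'_mem hne
        obtain ⟨S2, hS2, hS2c, c, hc⟩ := hN2 (X.erase a) (by rw [card_erase_of_mem haX]; omega)
          (fun e => χ (insert a e))
        obtain ⟨S1, hS1, hS1c, col, hcol⟩ := hN1 S2 hS2c.ge χ
        have haS1 : a ∉ S1 := fun h => by simpa using hS2 (hS1 h)
        have hlt : ∀ y ∈ S1, a < y := by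
          intro y hy
          have := mem_erase.1 (hS2 (hS1 hy))
          exact lt_of_le_of_ne (X.min'_le y this.2) (Ne.symm this.1)
        refine ⟨insert a S1, ?_, ?_, fun x => if x = a then c else col x, ?_⟩
        · intro x hx
          rcases mem_insert.1 hx with rfl | hx
          · exact haX
          · exact (mem_erase.1 (hS2 (hS1 hx))).2
        · rw [card_insert_of_notMem haS1, hS1c]
        · intro e he hek x hx hmin
          beta_reduce
          by_cases hae : a ∈ e
          · have hxa : x = a := by
              have h1 := hmin a hae
              rcases mem_insert.1 (he hx) with h | h
              · exact h
              · have := hlt x h; omega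
            rw [if_pos hxa]
            have := hc (e.erase a) (by
              intro y hy
              obtain ⟨h1, h2⟩ := mem_erase.1 hy
              rcases mem_insert.1 (he h2) with h | h
              · exact absurd h h1
              · exact hS1 h) (by rw [card_erase_of_mem hae]; omega)
            rwa [insert_erase hae] at this
          · have hxa : x ≠ a := fun h => hae (h ▸ hx)
            rw [if_neg hxa]
            refine hcol e ?_ hek x hx hmin
            intro y hy
            rcases mem_insert.1 (he hy) with h | h
            · exact absurd (h ▸ hy) hae
            · exact h
    intro n
    obtain ⟨N, hN⟩ := hQ (4 * n)
    refine ⟨N, fun X hX χ => ?_⟩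
    obtain ⟨S, hS, hSc, col, hcol⟩ := hN X hX χ
    obtain ⟨c, -, hc⟩ := exists_le_card_fiber_of_mul_le_card_of_maps_to (s := S)
      (t := (univ : Finset (Fin 4))) (f := col) (n := n) (fun _ _ => mem_univ _)
      (univ_nonempty) (by simp [hSc])
    obtain ⟨R, hR, hRc⟩ := exists_subset_card_eq hc
    refine ⟨R, hR.trans ((filter_subset _ _).trans hS), hRc, c, ?_⟩
    intro e he hek
    have hne : e.Nonempty := by rw [← card_pos]; omega
    have hm := e.min'_mem hne
    rw [hcol e (he.trans (hR.trans (filter_subset _ _))) hek _ hm (fun y hy => e.min'_le y hy)]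
    exact (mem_filter.1 (hR (he hm))).2

lemma twR_succ (k : ℕ) (x : ℝ) : twR (k + 2) x = (2 : ℝ) ^ twR (k + 1) x := rfl

lemma twR_mono (k : ℕ) : ∀ {x y : ℝ}, x ≤ y → twR (k + 1) x ≤ twR (k + 1) y := by
  induction k with
  | zero => intro x y h; exact h
  | succ k ih =>
    intro x y h
    rw [twR_succ, twR_succ]
    exact Real.rpow_le_rpow_of_exponent_le (by norm_num) (ih h)

lemma twR_nonneg (k : ℕ) {x : ℝ} (hx : 0 ≤ x) : 0 ≤ twR (k + 1) x := by
  cases k with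
  | zero => exact hx
  | succ k => rw [twR_succ]; positivity

lemma twR_add (k : ℕ) {x : ℝ} (hx : 0 ≤ x) : twR (k + 1) x + 1 ≤ twR (k + 1) (x + 1) := by
  induction k with
  | zero => exact le_refl _
  | succ k ih =>
    rw [twR_succ, twR_succ]
    have h1 : (2 : ℝ) ^ (twR (k + 1) x + 1) ≤ (2 : ℝ) ^ twR (k + 1) (x + 1) :=
      Real.rpow_le_rpow_of_exponent_le (by norm_num) ih
    rw [Real.rpow_add (by norm_num), Real.rpow_one] at h1
    have h2 : (1 : ℝ) ≤ (2 : ℝ) ^ twR (k + 1) x :=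
      Real.one_le_rpow (by norm_num) (twR_nonneg k hx)
    linarith

lemma twR_two (k : ℕ) {x : ℝ} (hx : 0 ≤ x) : 2 * twR (k + 2) x ≤ twR (k + 2) (x + 1) := by
  rw [twR_succ, twR_succ]
  have h1 : (2 : ℝ) ^ (twR (k + 1) x + 1) ≤ (2 : ℝ) ^ twR (k + 1) (x + 1) :=
    Real.rpow_le_rpow_of_exponent_le (by norm_num) (twR_add k hx)
  rw [Real.rpow_add (by norm_num), Real.rpow_one] at h1
  linarith

def tn : ℕ → ℕ → ℕ
  | 0, p => p
  | 1, p => p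
  | (k + 2), p => 2 ^ tn (k + 1) p

lemma twR_tn (k p : ℕ) : twR (k + 1) (p : ℝ) = (tn (k + 1) p : ℝ) := by
  induction k with
  | zero => rfl
  | succ k ih =>
    rw [twR_succ, ih, Real.rpow_natCast, tn]; push_cast; rfl

lemma good_all (k : ℕ) (hk : 2 ≤ k) : ∃ t a : ℕ, 1 ≤ a ∧ ∀ p : ℕ, ∃ χ : Finset ℕ → Fin 4,
    Good k (tn k p) (a * (p + 1)) t χ ∧ (3 ≤ k ∨ ∀ e, χ e ≠ 0) := by
  rcases Nat.lt_or_ge k 3 with h | h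
  · obtain rfl : k = 2 := by omega
    refine ⟨1, 4, by norm_num, fun p => ?_⟩
    obtain ⟨φ, hφ⟩ := base p
    refine ⟨fun e => if φ e then 1 else 2, ?_, Or.inr ?_⟩
    · intro I A h1 h2 h3 h4 c hc
      refine hφ I A (by omega) h2 h3 h4 (decide (c = 1)) ?_
      intro i hi j hj e he hek
      have := hc i hi j hj e he hek
      beta_reduce at this
      rw [← this]
      cases φ e <;> simp
    · intro e
      beta_reduce
      split_ifs <;> decide
  · induction k, h using Nat.le_induction with
    | base =>
      refine ⟨2, 4, by norm_num, fun p => ?_⟩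
      obtain ⟨φ, hφ⟩ := base p
      obtain ⟨χ, hχ⟩ := step3 hφ
      refine ⟨χ, ?_, Or.inl le_rfl⟩
      have : 4 * p + 4 = 4 * (p + 1) := by ring
      rw [this] at hχ
      exact hχ
    | succ k h ih =>
      obtain ⟨t, a, ha, H⟩ := ih (by omega)
      refine ⟨2 * t + 4 + k, 2 * a, by omega, fun p => ?_⟩
      obtain ⟨χ, hχ, -⟩ := H p
      obtain ⟨χ', hχ'⟩ := stepk h hχ
      refine ⟨χ', ?_, Or.inl (by omega)⟩
      obtain ⟨k, rfl⟩ : ∃ k', k = k' + 1 := ⟨k - 1, by omega⟩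
      rw [show 2 * a * (p + 1) = 2 * (a * (p + 1)) by ring]
      exact hχ'

def bcol (β : ℕ → ℕ) (χ : Finset ℕ → Fin 4) (e : Finset ℕ) : Fin 4 :=
  if ∀ x ∈ e, ∀ y ∈ e, β x = β y → x = y then χ (e.image β)
  else if ∀ x ∈ e, ∀ y ∈ e, β x = β y then 0
  else if ∃ x ∈ e, ∃ y ∈ e, x ≠ y ∧ β x = β y ∧ ∀ w ∈ e, β x ≤ β w then 2 else 1

lemma bconst {β : ℕ → ℕ} (hβ : Monotone β) {χ : Finset ℕ → Fin 4} {k : ℕ} (hk : 2 ≤ k)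
    (hχ : 3 ≤ k ∨ ∀ e, χ e ≠ 0) {Y : Finset ℕ} {c : Fin 4}
    (hY : ∀ e ⊆ Y, e.card = k → bcol β χ e = c) {y y' : ℕ} (hy : y ∈ Y) (hy' : y' ∈ Y)
    (hlt : y < y') (hyy : β y = β y') {W U : Finset ℕ} (hW : W ⊆ Y) (hU : U ⊆ Y)
    (hWk : W.card = k) (hUk : U.card = k) (hWy : ∀ w ∈ W, w < y) (hUy : ∀ u ∈ U, y' < u) :
    ∀ z ∈ Y, β z = β y := by
  have hχ1 : 3 ≤ k ∨ (k = 2 ∧ ∀ e, χ e ≠ 0) := by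
    rcases hχ with h | h
    · exact Or.inl h
    · rcases Nat.lt_or_ge 2 k with h3 | h3
      · exact Or.inl h3
      · exact Or.inr ⟨by omega, h⟩
  rcases hχ1 with h3 | ⟨rfl, hχ2⟩
  · have high : ∀ z ∈ Y, β y < β z → c = 2 := by
      intro z hz hbz
      obtain ⟨e, he1, he2, hek⟩ := exists_subsuperset_card_eq (s := {y, y', z})
        (t := {y, y', z} ∪ U) (n := k) subset_union_left (card_le_three.trans h3)
        (hUk.ge.trans (card_le_card subset_union_right))
      have hye : y ∈ e := he1 (by simp)
      have hye' : y' ∈ e := he1 (by simp)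
      have hze : z ∈ e := he1 (by simp)
      rw [← hY e (he2.trans (union_subset (by
        intro x hx; simp only [mem_insert, mem_singleton] at hx
        rcases hx with rfl | rfl | rfl <;> assumption) hU)) hek]
      unfold bcol
      rw [if_neg, if_neg, if_pos]
      · refine ⟨y, hye, y', hye', hlt.ne, hyy, ?_⟩
        intro w hw
        have := he2 hw
        simp only [mem_union, mem_insert, mem_singleton] at this
        rcases this with (rfl | rfl | rfl) | h
        · exact le_rfl
        · exact hyy.le
        · exact hbz.le
        · exact hβ (hlt.le.trans (hUy w h).le)
      · intro h; exact absurd (h y hye z hze) hbz.ne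
      · intro h; exact absurd (h y hye y' hye' hyy) hlt.ne
    have low : ∀ z ∈ Y, β z < β y → c = 1 := by
      intro z hz hbz
      obtain ⟨e, he1, he2, hek⟩ := exists_subsuperset_card_eq (s := {y, y', z})
        (t := {y, y', z} ∪ U) (n := k) subset_union_left (card_le_three.trans h3)
        (hUk.ge.trans (card_le_card subset_union_right))
      have hye : y ∈ e := he1 (by simp)
      have hye' : y' ∈ e := he1 (by simp)
      have hze : z ∈ e := he1 (by simp)
      rw [← hY e (he2.trans (union_subset (by
        intro x hx; simp only [mem_insert, mem_singleton] at hx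
        rcases hx with rfl | rfl | rfl <;> assumption) hU)) hek]
      have hz' : ∀ w ∈ e, β w ≤ β z → w = z := by
        intro w hw hwz
        have := he2 hw
        simp only [mem_union, mem_insert, mem_singleton] at this
        rcases this with (rfl | rfl | rfl) | h
        · omega
        · omega
        · rfl
        · have := hβ (hlt.le.trans (hUy w h).le)
          omega
      unfold bcol
      rw [if_neg, if_neg, if_neg]
      · rintro ⟨x, hx, x', hx', hne, hxx, hmin⟩
        have h1 := hmin z hze
        exact hne ((hz' x hx h1).trans (hz' x' hx' (hxx ▸ h1)).symm)
      · intro h; exact absurd (h y hye z hze) hbz.ne'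
      · intro h; exact absurd (h y hye y' hye' hyy) hlt.ne
    have same : ∀ V ⊆ Y, V.card = k → (∀ v ∈ V, β v = β y) → c = 0 := by
      intro V hV hVk hVb
      rw [← hY V hV hVk]
      unfold bcol
      rw [if_neg, if_pos]
      · intro x hx x' hx'; rw [hVb x hx, hVb x' hx']
      · intro h
        obtain ⟨x, hx, x', hx', hne⟩ := one_lt_card.1 (show 1 < V.card by omega)
        exact hne (h x hx x' hx' (by rw [hVb x hx, hVb x' hx']))
    by_cases hH : ∃ z ∈ Y, β y < β z
    · obtain ⟨z, hz, hbz⟩ := hH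
      have c2 := high z hz hbz
      by_cases hL : ∃ z ∈ Y, β z < β y
      · obtain ⟨z, hz, hbz⟩ := hL
        have c1 := low z hz hbz
        rw [c1] at c2; exact absurd c2 (by decide)
      · push Not at hL
        have c0 := same W hW hWk (fun v hv =>
          le_antisymm (hβ (hWy v hv).le) (hL v (hW hv)))
        rw [c0] at c2; exact absurd c2 (by decide)
    · push Not at hH
      have c0 := same U hU hUk (fun v hv =>
          le_antisymm (hH v (hU hv)) (hβ (hlt.le.trans (hUy v hv).le)))
      intro z hz
      by_contra hne
      have c1 := low z hz (lt_of_le_of_ne (hH z hz) hne)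
      rw [c0] at c1; exact absurd c1 (by decide)
  · have h0 := hY {y, y'} (by
      intro x hx; simp only [mem_insert, mem_singleton] at hx
      rcases hx with rfl | rfl <;> assumption) (card_pair hlt.ne)
    unfold bcol at h0
    rw [if_neg (by intro h; exact absurd (h y (by simp) y' (by simp) hyy) hlt.ne),
      if_pos (by simp [hyy])] at h0
    intro z hz
    by_contra hne
    have hyz : y ≠ z := fun h => hne (by rw [h])
    have h1 := hY {y, z} (by
      intro x hx; simp only [mem_insert, mem_singleton] at hx
      rcases hx with rfl | rfl <;> assumption) (card_pair hyz)
    unfold bcol at h1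
    rw [if_pos (by
      intro x hx x' hx' h
      simp only [mem_insert, mem_singleton] at hx hx'
      rcases hx with rfl | rfl <;> rcases hx' with rfl | rfl
      · rfl
      · exact absurd h.symm hne
      · exact absurd h hne
      · rfl)] at h1
    exact hχ2 _ (h1.trans h0.symm)

lemma split3 (s : Finset ℕ) (k r : ℕ) (h : s.card = r + 2 * k) : ∃ W M U : Finset ℕ,
    W ⊆ s ∧ M ⊆ s ∧ U ⊆ s ∧ W.card = k ∧ M.card = r ∧ U.card = k ∧
    (∀ w ∈ W, ∀ y ∈ M, w < y) ∧ (∀ y ∈ M, ∀ u ∈ U, y < u) := by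
  obtain ⟨W, hW, hWk, hlt⟩ := exists_bottom s k (by omega)
  have h1 : (s \ W).card = r + k := by rw [card_sdiff_of_subset hW]; omega
  obtain ⟨M, hM, hMr, hlt2⟩ := exists_bottom (s \ W) r (by omega)
  have h2 : ((s \ W) \ M).card = k := by rw [card_sdiff_of_subset hM]; omega
  exact ⟨W, M, (s \ W) \ M, hW, hM.trans sdiff_subset, sdiff_subset.trans sdiff_subset, hWk, hMr, h2,
    fun w hw y hy => hlt w hw y (hM hy), hlt2⟩

lemma core {β : ℕ → ℕ} (hβ : Monotone β) {χ : Finset ℕ → Fin 4} {k T m t n g : ℕ} (hk : 2 ≤ k)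
    (hχ : 3 ≤ k ∨ ∀ e, χ e ≠ 0) (hG : Good k T m t χ) (hm : 1 ≤ m) (hg : g = t + 2 + 2 * k)
    (hmg : m * g ≤ n) (F : ℕ → ℕ) (hF : Set.InjOn F (Set.Iio n))
    (hT : ∀ v < n, β (F v) < T) (hnc : ¬ ∀ v < n, β (F v) = β (F 0)) (c : Fin 4)
    (hc : ∀ a b, a ≤ b + m * g → b ≤ a + m * g → a + g ≤ n → b + g ≤ n →
      ∀ e ⊆ (Ico a (a + g)).image F ∪ (Ico b (b + g)).image F, e.card = k → bcol β χ e = c) :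
    False := by
  set X : ℕ → Finset ℕ := fun a => (Ico a (a + g)).image F with hX
  have hgm : g ≤ m * g := Nat.le_mul_of_pos_left g hm
  have hXc : ∀ a, a + g ≤ n → (X a).card = t + 2 + 2 * k := by
    intro a ha
    rw [hX]; beta_reduce
    rw [card_image_of_injOn, Nat.card_Ico]
    · omega
    · intro x hx y hy h
      simp only [coe_Ico, Set.mem_Ico] at hx hy
      exact hF (Set.mem_Iio.2 (by omega)) (Set.mem_Iio.2 (by omega)) h
  have hs : ∀ a, ∃ W M U : Finset ℕ, a + g ≤ n → 
    W ⊆ X a ∧ M ⊆ X a ∧ U ⊆ X a ∧ W.card = k ∧ M.card = t + 2 ∧ U.card = k ∧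
    (∀ w ∈ W, ∀ y ∈ M, w < y) ∧ (∀ y ∈ M, ∀ u ∈ U, y < u) := by
    intro a
    by_cases ha : a + g ≤ n
    · obtain ⟨W, M, U, h⟩ := split3 (X a) k (t + 2) (hXc a ha)
      exact ⟨W, M, U, fun _ => h⟩
    · exact ⟨∅, ∅, ∅, fun h => absurd h ha⟩
  choose W M U hs using hs
  have key0 : ∀ a b, a ≤ b + m * g → b ≤ a + m * g → a + g ≤ n → b + g ≤ n →
      ∀ y ∈ M a ∪ M b, ∀ y' ∈ M a ∪ M b, y < y' → β y = β y' →
      ∀ z ∈ X a ∪ X b, β z = β y := by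
    intro a b h1 h2 ha hb y hy y' hy' hlt hyy
    obtain ⟨a1, a2, a3, a4, a5, a6, a7, a8⟩ := hs a ha
    obtain ⟨b1, b2, b3, b4, b5, b6, b7, b8⟩ := hs b hb
    have hyW : ∃ W' ⊆ X a ∪ X b, W'.card = k ∧ ∀ w ∈ W', w < y := by
      rcases mem_union.1 hy with h | h
      · exact ⟨W a, a1.trans subset_union_left, a4, fun w hw => a7 w hw y h⟩
      · exact ⟨W b, b1.trans subset_union_right, b4, fun w hw => b7 w hw y h⟩
    have hyU : ∃ W' ⊆ X a ∪ X b, W'.card = k ∧ ∀ w ∈ W', y' < w := by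
      rcases mem_union.1 hy' with h | h
      · exact ⟨U a, a3.trans subset_union_left, a6, fun w hw => a8 y' h w hw⟩
      · exact ⟨U b, b3.trans subset_union_right, b6, fun w hw => b8 y' h w hw⟩
    obtain ⟨W', w1, w2, w3⟩ := hyW
    obtain ⟨U', u1, u2, u3⟩ := hyU
    exact bconst hβ hk hχ (hc a b h1 h2 ha hb) (union_subset_union a2 b2 hy)
      (union_subset_union a2 b2 hy') hlt hyy w1 u1 w2 u2 w3 u3
  have key : ∀ a b, a ≤ b + m * g → b ≤ a + m * g → a + g ≤ n → b + g ≤ n →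
      ∀ y ∈ M a ∪ M b, ∀ y' ∈ M a ∪ M b, y ≠ y' → β y = β y' →
      ∀ z ∈ X a ∪ X b, β z = β y := by
    intro a b h1 h2 ha hb y hy y' hy' hne hyy
    rcases lt_or_gt_of_ne hne with h | h
    · exact key0 a b h1 h2 ha hb y hy y' hy' h hyy
    · rw [hyy]; exact key0 a b h1 h2 ha hb y' hy' y hy h hyy.symm
  have prop : ∀ a b, a ≤ b + m * g → b ≤ a + m * g → a + g ≤ n → b + g ≤ n →
      ∀ r, (∀ x ∈ X a, β x = r) → ∀ x ∈ X b, β x = r := by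
    intro a b h1 h2 ha hb r hr x hx
    obtain ⟨a1, a2, a3, a4, a5, a6, a7, a8⟩ := hs a ha
    obtain ⟨y, hy, y', hy', hne⟩ := one_lt_card.1 (show 1 < (M a).card by omega)
    rw [key a b h1 h2 ha hb y (mem_union_left _ hy) y' (mem_union_left _ hy') hne
      (by rw [hr y (a2 hy), hr y' (a2 hy')]) x (mem_union_right _ hx)]
    exact hr y (a2 hy)
  have no0 : ∀ r, ¬ ∀ x ∈ X 0, β x = r := by
    intro r hr
    have hall : ∀ a, a + g ≤ n → ∀ x ∈ X a, β x = r := by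
      intro a
      induction a with
      | zero => intro _; exact hr
      | succ a ih =>
        intro ha
        exact prop a (a + 1) (by omega) (by omega) (by omega) ha r (ih (by omega))
    have hv : ∀ v < n, β (F v) = r := by
      intro v hv
      apply hall (min v (n - g)) (by omega)
      exact mem_image_of_mem _ (mem_Ico.2 ⟨by omega, by omega⟩)
    exact hnc (fun v h => by rw [hv v h, hv 0 (by omega)])
  have hval : ∀ i < m, i * g + g ≤ n := by
    intro i hi
    have : (i + 1) * g ≤ m * g := Nat.mul_le_mul_right g hi
    have h2 : (i + 1) * g = i * g + g := by ring
    omega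
  have inj : ∀ i < m, ∀ j < m, ∀ y ∈ M (i * g) ∪ M (j * g), ∀ y' ∈ M (i * g) ∪ M (j * g),
      β y = β y' → y = y' := by
    intro i hi j hj y hy y' hy' hyy
    by_contra hne
    have hi' := hval i hi
    have hj' := hval j hj
    have hi2 : i * g ≤ m * g := Nat.mul_le_mul_right g hi.le
    have hj2 : j * g ≤ m * g := Nat.mul_le_mul_right g hj.le
    have h1 := key (i * g) (j * g) (by omega) (by omega) hi' hj' y hy y' hy' hne hyy
    exact no0 (β y) (prop (i * g) 0 (by omega) (by omega) hi' (by omega) (β y)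
      (fun x hx => h1 x (mem_union_left _ hx)))
  refine hG (range m) (fun i => (M (i * g)).image β) (by simp) ?_ ?_ ?_ c ?_
  · intro i hi x hx
    obtain ⟨y, hy, rfl⟩ := mem_image.1 hx
    obtain ⟨v, hv, rfl⟩ := mem_image.1 ((hs _ (hval i (mem_range.1 hi))).2.1 hy)
    have := hval i (mem_range.1 hi)
    exact mem_range.2 (hT v (by have := mem_Ico.1 hv; omega))
  · intro i hi
    beta_reduce
    rw [card_image_of_injOn]
    · rw [(hs _ (hval i (mem_range.1 hi))).2.2.2.2.1]; omega
    · intro x hx y hy h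
      exact inj i (mem_range.1 hi) i (mem_range.1 hi) x (mem_union_left _ hx) y
        (mem_union_left _ hy) h
  · intro i hi j hj hij
    rw [Finset.disjoint_left]
    intro x hx hx'
    obtain ⟨y, hy, rfl⟩ := mem_image.1 hx
    obtain ⟨y', hy', h⟩ := mem_image.1 hx'
    have hvi := hval i (mem_range.1 hi)
    have hvj := hval j (mem_range.1 hj)
    have := inj i (mem_range.1 hi) j (mem_range.1 hj) y' (mem_union_right _ hy') y
      (mem_union_left _ hy) h
    subst this
    obtain ⟨v, hv, h1⟩ := mem_image.1 ((hs _ hvi).2.1 hy)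
    obtain ⟨w, hw, h2⟩ := mem_image.1 ((hs _ hvj).2.1 hy')
    rw [mem_Ico] at hv hw
    have hvw := hF (Set.mem_Iio.2 (by omega)) (Set.mem_Iio.2 (by omega)) (h1.trans h2.symm)
    subst hvw
    rcases lt_or_gt_of_ne hij with h | h
    · have : (i + 1) * g ≤ j * g := Nat.mul_le_mul_right g h
      have h2 : (i + 1) * g = i * g + g := by ring
      omega
    · have : (j + 1) * g ≤ i * g := Nat.mul_le_mul_right g h
      have h2 : (j + 1) * g = j * g + g := by ring
      omega
  · intro i hi j hj e he hek
    have hi := mem_range.1 hi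
    have hj := mem_range.1 hj
    have hvi := hval i hi
    have hvj := hval j hj
    have hi2 : i * g ≤ m * g := Nat.mul_le_mul_right g hi.le
    have hj2 : j * g ≤ m * g := Nat.mul_le_mul_right g hj.le
    set e' := (M (i * g) ∪ M (j * g)).filter (fun x => β x ∈ e) with he'
    have hinj' : ∀ x ∈ e', ∀ y ∈ e', β x = β y → x = y := fun x hx y hy h =>
      inj i hi j hj x (mem_filter.1 hx).1 y (mem_filter.1 hy).1 h
    have him : e'.image β = e := by
      ext x
      simp only [mem_image, he', mem_filter]
      constructor
      · rintro ⟨y, ⟨-, h⟩, rfl⟩; exact h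
      · intro hx
        rcases mem_union.1 (he hx) with h | h
        · obtain ⟨y, hy, rfl⟩ := mem_image.1 h
          exact ⟨y, ⟨mem_union_left _ hy, hx⟩, rfl⟩
        · obtain ⟨y, hy, rfl⟩ := mem_image.1 h
          exact ⟨y, ⟨mem_union_right _ hy, hx⟩, rfl⟩
    have hcard : e'.card = k := by
      rw [← hek, ← him, card_image_of_injOn]
      intro x hx y hy h
      exact hinj' x hx y hy h
    have := hc (i * g) (j * g) (by omega) (by omega) hvi hvj e'
      ((filter_subset _ _).trans (union_subset_union (hs _ hvi).2.1 (hs _ hvj).2.1)) hcard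
    unfold bcol at this
    rw [if_pos hinj', him] at this
    exact this

open Classical in
/-- the extremal hypergraph -/
def edgesH (n k g D : ℕ) : Finset (Finset (Fin n)) :=
  Finset.univ.filter (fun e => e.card = k ∧ ∃ a b : ℕ, a ≤ b + D ∧ b ≤ a + D ∧
    ∀ v ∈ e, (a ≤ (v : ℕ) ∧ (v : ℕ) < a + g) ∨ (b ≤ (v : ℕ) ∧ (v : ℕ) < b + g))

open Classical in
lemma mem_edgesH {n k g D : ℕ} {e : Finset (Fin n)} : e ∈ edgesH n k g D ↔
    (e.card = k ∧ ∃ a b : ℕ, a ≤ b + D ∧ b ≤ a + D ∧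
    ∀ v ∈ e, (a ≤ (v : ℕ) ∧ (v : ℕ) < a + g) ∨ (b ≤ (v : ℕ) ∧ (v : ℕ) < b + g)) := by
  unfold edgesH
  rw [Finset.mem_filter]
  exact ⟨fun h => h.2, fun h => ⟨Finset.mem_univ _, h⟩⟩

lemma edges_deg (n k g D : ℕ) (v : Fin n) :
    ((edgesH n k g D).filter fun e => v ∈ e).card ≤ (g + 1) * ((2 * D + 1) * 2 ^ (2 * g)) := by
  let P : ℕ → ℕ → Finset (Finset (Fin n)) := fun a b =>
    (univ.filter (fun w : Fin n => (a ≤ (w : ℕ) ∧ (w : ℕ) < a + g) ∨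
      (b ≤ (w : ℕ) ∧ (w : ℕ) < b + g))).powerset
  have hcov : (edgesH n k g D).filter (fun e => v ∈ e) ⊆
      (Icc ((v : ℕ) - g) v).biUnion (fun a => (Icc (a - D) (a + D)).biUnion (fun b => P a b)) := by
    intro e he
    obtain ⟨he1, hv⟩ := mem_filter.1 he
    obtain ⟨-, a, b, hab, hba, hw⟩ := mem_edgesH.1 he1
    simp only [mem_biUnion, P, mem_powerset, mem_Icc]
    rcases hw v hv with h | h
    · refine ⟨a, ⟨by omega, by omega⟩, b, ⟨by omega, by omega⟩, ?_⟩
      intro w hwe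
      exact mem_filter.2 ⟨mem_univ _, hw w hwe⟩
    · refine ⟨b, ⟨by omega, by omega⟩, a, ⟨by omega, by omega⟩, ?_⟩
      intro w hwe
      exact mem_filter.2 ⟨mem_univ _, (hw w hwe).symm⟩
  have hP : ∀ a b, (P a b).card ≤ 2 ^ (2 * g) := by
    intro a b
    simp only [P, card_powerset]
    apply Nat.pow_le_pow_right (by norm_num)
    rw [← card_map Fin.valEmbedding]
    have : (univ.filter (fun w : Fin n => (a ≤ (w : ℕ) ∧ (w : ℕ) < a + g) ∨
      (b ≤ (w : ℕ) ∧ (w : ℕ) < b + g))).map Fin.valEmbedding ⊆ Ico a (a + g) ∪ Ico b (b + g) := by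
      intro x hx
      obtain ⟨w, hw, rfl⟩ := mem_map.1 hx
      have := (mem_filter.1 hw).2
      simpa using this
    refine (card_le_card this).trans ((card_union_le _ _).trans ?_)
    simp only [Nat.card_Ico]; omega
  refine (card_le_card hcov).trans ?_
  refine (card_biUnion_le_card_mul _ _ ((2 * D + 1) * 2 ^ (2 * g)) ?_).trans ?_
  · intro a _
    refine (card_biUnion_le_card_mul _ _ (2 ^ (2 * g)) (fun b _ => hP a b)).trans ?_
    apply Nat.mul_le_mul_right
    rw [Nat.card_Icc]; omega
  · apply Nat.mul_le_mul_right
    rw [Nat.card_Icc]; omega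

lemma lower {χ : Finset ℕ → Fin 4} {k T m t n g N : ℕ} (hk : 2 ≤ k)
    (hχ : 3 ≤ k ∨ ∀ e, χ e ≠ 0) (hG : Good k T m t χ) (hm : 1 ≤ m) (hg : g = t + 2 + 2 * k)
    (hmg : m * g ≤ n) (hN : N ≤ T * (n - 1)) : ¬ arrowsProp n N 4 (edgesH n k g (m * g)) := by
  intro harr
  have hgm : g ≤ m * g := Nat.le_mul_of_pos_left g hm
  obtain ⟨f, i, hf⟩ := harr (fun e => bcol (fun x => x / (n - 1)) χ (e.map Fin.valEmbedding))
  have hFi : ∀ v (h : v < n), (fun v => if h : v < n then ((f ⟨v, h⟩ : Fin N) : ℕ) else 0) v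
      = (f ⟨v, h⟩ : ℕ) := fun v h => by simp [h]
  generalize (fun v => if h : v < n then ((f ⟨v, h⟩ : Fin N) : ℕ) else 0) = F at hFi
  have hinj : Set.InjOn F (Set.Iio n) := by
    intro x hx y hy h
    rw [Set.mem_Iio] at hx hy
    rw [hFi x hx, hFi y hy] at h
    have := f.injective (Fin.ext h)
    exact congrArg Fin.val this
  refine core (β := fun x => x / (n - 1)) (fun x y h => Nat.div_le_div_right h) hk hχ hG hm hg hmg
    F hinj ?_ ?_ i ?_
  · intro v hv
    apply Nat.div_lt_of_lt_mul
    rw [hFi v hv, mul_comm]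
    exact lt_of_lt_of_le (f ⟨v, hv⟩).2 hN
  · intro hcst
    beta_reduce at hcst
    have hsub : (range n).image F ⊆ Ico (F 0 / (n - 1) * (n - 1)) (F 0 / (n - 1) * (n - 1) + (n - 1)) := by
      intro x hx
      obtain ⟨v, hv, rfl⟩ := mem_image.1 hx
      rw [← hcst v (mem_range.1 hv)]
      have h1 := Nat.div_add_mod' (F v) (n - 1)
      have h2 := Nat.mod_lt (F v) (show 0 < n - 1 by omega)
      rw [mem_Ico]; omega
    have := card_le_card hsub
    rw [card_image_of_injOn (by intro x hx y hy h; exact hinj (by simpa using hx) (by simpa using hy) h),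
      card_range, Nat.card_Ico] at this
    omega
  · intro a b hab hba ha hb e he hek
    let e' : Finset (Fin n) := univ.filter (fun v => F v ∈ e ∧
      ((a ≤ (v : ℕ) ∧ (v : ℕ) < a + g) ∨ (b ≤ (v : ℕ) ∧ (v : ℕ) < b + g)))
    have hmap : (e'.map f).map Fin.valEmbedding = e := by
      ext x
      simp only [mem_map, e', mem_filter, mem_univ, true_and]
      constructor
      · rintro ⟨_, ⟨v, ⟨hv, -⟩, rfl⟩, rfl⟩
        rwa [hFi v v.2] at hv
      · intro hx
        rcases mem_union.1 (he hx) with h | h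
        · obtain ⟨v, hv, rfl⟩ := mem_image.1 h
          rw [mem_Ico] at hv
          have hvn : v < n := by omega
          exact ⟨f ⟨v, hvn⟩, ⟨⟨v, hvn⟩, ⟨hx, Or.inl hv⟩, rfl⟩, (hFi v hvn).symm⟩
        · obtain ⟨v, hv, rfl⟩ := mem_image.1 h
          rw [mem_Ico] at hv
          have hvn : v < n := by omega
          exact ⟨f ⟨v, hvn⟩, ⟨⟨v, hvn⟩, ⟨hx, Or.inr hv⟩, rfl⟩, (hFi v hvn).symm⟩
    have := hf e' (mem_edgesH.2 ⟨by rw [← hek, ← hmap, card_map, card_map],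
      a, b, hab, hba, fun v hv => (mem_filter.1 hv).2.2⟩)
    beta_reduce at this
    rw [hmap] at this
    exact this

lemma ramsey_nonempty (n k : ℕ) (E : Finset (Finset (Fin n))) (hE : ∀ e ∈ E, e.card = k) :
    ∃ N, arrowsProp n N 4 E := by
  obtain ⟨N, hN⟩ := ramsey_exists k n
  refine ⟨N, fun χ => ?_⟩
  obtain ⟨S, hS, hSn, c, hc⟩ := hN (range N) (by simp)
    (fun e => χ (univ.filter (fun i : Fin N => (i : ℕ) ∈ e)))
  let f0 : Fin n → Fin N := fun i => ⟨S.orderEmbOfFin hSn i,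
    mem_range.1 (hS (S.orderEmbOfFin_mem hSn i))⟩
  have hf0 : Function.Injective f0 := by
    intro i j h
    exact (S.orderEmbOfFin hSn).injective (congrArg Fin.val h)
  refine ⟨⟨f0, hf0⟩, c, fun e he => ?_⟩
  have := hc ((e.map ⟨f0, hf0⟩).map Fin.valEmbedding) (by
    intro x hx
    simp only [mem_map] at hx
    obtain ⟨_, ⟨i, hi, rfl⟩, rfl⟩ := hx
    exact S.orderEmbOfFin_mem hSn i) (by rw [card_map, card_map]; exact hE e he)
  rw [← this]
  congr 1
  ext x
  simp only [mem_map, mem_filter, mem_univ, true_and]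
  constructor
  · rintro h; exact ⟨x, h, rfl⟩
  · rintro ⟨y, h, hy⟩
    have : y = x := Fin.ext hy
    rwa [← this]

theorem main_aux (k : ℕ) (hk : 2 ≤ k) :
    ∃ c : ℝ, 0 < c ∧ ∀ Δ n : ℕ, 1 / c ≤ (Δ : ℝ) → Δ ≤ n →
      ∃ E : Finset (Finset (Fin n)),
        (∀ e ∈ E, e.card = k) ∧
        (∀ v : Fin n, (E.filter fun e => v ∈ e).card ≤ Δ) ∧
        twR k (c * (Δ : ℝ)) * (n : ℝ) ≤ (ramseyNumber n 4 E : ℝ) := by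
  obtain ⟨t, a, ha, hgood⟩ := good_all k hk
  obtain ⟨g, hg⟩ : ∃ g, g = t + 2 + 2 * k := ⟨_, rfl⟩
  obtain ⟨K, hK⟩ : ∃ K, K = (g + 1) * ((2 * (a * g) + 1) * 2 ^ (2 * g)) := ⟨_, rfl⟩
  have hKpos : 1 ≤ K := by rw [hK]; exact Nat.succ_le_of_lt (by positivity)
  have hKag : a * g ≤ K := by
    rw [hK]
    have h1 : 1 ≤ 2 ^ (2 * g) := Nat.one_le_two_pow
    have h2 : 2 * (a * g) + 1 ≤ (2 * (a * g) + 1) * 2 ^ (2 * g) := Nat.le_mul_of_pos_right _ h1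
    have h3 : (2 * (a * g) + 1) * 2 ^ (2 * g) ≤ (g + 1) * ((2 * (a * g) + 1) * 2 ^ (2 * g)) :=
      Nat.le_mul_of_pos_left _ (by omega)
    omega
  have hKR : (1 : ℝ) ≤ (K : ℝ) := by exact_mod_cast hKpos
  refine ⟨1 / (4 * (K : ℝ)), by positivity, ?_⟩
  intro Δ n hΔ hn
  rw [one_div_one_div] at hΔ
  have hΔ4 : 4 * K ≤ Δ := by exact_mod_cast hΔ
  obtain ⟨p, hp⟩ : ∃ p, Δ / K = p + 1 := by
    have : 4 ≤ Δ / K := (Nat.le_div_iff_mul_le hKpos).2 hΔ4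
    exact ⟨Δ / K - 1, by omega⟩
  have hpK : (p + 1) * K ≤ Δ := by rw [← hp]; exact Nat.div_mul_le_self _ _
  have hpK2 : Δ < (p + 2) * K := by
    have := Nat.lt_mul_div_succ Δ hKpos
    rw [hp] at this
    linarith
  obtain ⟨χ, hG, hχ⟩ := hgood p
  have hm : 1 ≤ a * (p + 1) := Nat.succ_le_of_lt (by positivity)
  have hmg : a * (p + 1) * g ≤ n := by
    calc a * (p + 1) * g = (p + 1) * (a * g) := by ring
      _ ≤ (p + 1) * K := Nat.mul_le_mul_left _ hKag
      _ ≤ n := hpK.trans hn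
  have hcard : ∀ e ∈ edgesH n k g (a * (p + 1) * g), e.card = k := fun e he =>
    (mem_edgesH.1 he).1
  refine ⟨edgesH n k g (a * (p + 1) * g), hcard, ?_, ?_⟩
  · intro v
    refine (edges_deg n k g _ v).trans (le_trans ?_ hpK)
    rw [hK]
    have : 2 * (a * (p + 1) * g) + 1 ≤ (p + 1) * (2 * (a * g) + 1) := by nlinarith
    calc (g + 1) * ((2 * (a * (p + 1) * g) + 1) * 2 ^ (2 * g))
        ≤ (g + 1) * (((p + 1) * (2 * (a * g) + 1)) * 2 ^ (2 * g)) := by gcongr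
      _ = _ := by ring
  · have hmem : arrowsProp n (ramseyNumber n 4 (edgesH n k g (a * (p + 1) * g))) 4
        (edgesH n k g (a * (p + 1) * g)) :=
      Nat.sInf_mem (ramsey_nonempty n k _ hcard)
    have hlt : tn k p * (n - 1) < ramseyNumber n 4 (edgesH n k g (a * (p + 1) * g)) := by
      by_contra hle
      exact lower hk hχ hG hm hg hmg (not_lt.1 hle) hmem
    have hltR : (tn k p : ℝ) * ((n : ℝ) - 1) ≤
        (ramseyNumber n 4 (edgesH n k g (a * (p + 1) * g)) : ℝ) := by
      have h1 : ((n - 1 : ℕ) : ℝ) = (n : ℝ) - 1 := by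
        rw [Nat.cast_sub (by omega)]; simp
      rw [← h1]
      exact_mod_cast hlt.le
    refine le_trans ?_ hltR
    obtain ⟨k, rfl⟩ : ∃ k', k = k' + 2 := ⟨k - 2, by omega⟩
    have hx0 : 0 ≤ 1 / (4 * (K : ℝ)) * (Δ : ℝ) := by positivity
    have h2 := twR_two k hx0
    have h3 : 1 / (4 * (K : ℝ)) * (Δ : ℝ) + 1 ≤ (p : ℝ) := by
      have hR : (Δ : ℝ) < ((p : ℝ) + 2) * K := by exact_mod_cast hpK2
      have hp3 : (3 : ℝ) ≤ p := by
        have : 4 ≤ Δ / K := (Nat.le_div_iff_mul_le hKpos).2 hΔ4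
        have h : 3 ≤ p := by omega
        exact_mod_cast h
      have h4 : 1 / (4 * (K : ℝ)) * (Δ : ℝ) ≤ ((p : ℝ) + 2) / 4 := by
        rw [one_div, inv_mul_le_iff₀ (by positivity)]
        linarith
      linarith
    have h4 := twR_mono (k + 1) h3
    rw [twR_tn (k + 1) p] at h4
    have h5 : (2 : ℝ) ≤ n := by
      have : 2 ≤ n := by omega
      exact_mod_cast this
    have h6 : 0 ≤ twR (k + 2) (1 / (4 * (K : ℝ)) * (Δ : ℝ)) := twR_nonneg (k + 1) hx0
    have h7 : 2 * twR (k + 2) (1 / (4 * (K : ℝ)) * (Δ : ℝ)) ≤ (tn (k + 2) p : ℝ) := h2.trans h4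
    nlinarith

end Helpers

/-- For every `k ≥ 2` there is a constant `c_k > 0` such that for all integers
`Δ ≥ 1/c_k` and `n ≥ Δ`, there exists a `k`-uniform hypergraph on `n` vertices with
maximum degree at most `Δ` whose `4`-color Ramsey number is at least `tw_k(c_k·Δ)·n`. -/
theorem stmt_0 (k : ℕ) (hk : 2 ≤ k) :
    ∃ c : ℝ, 0 < c ∧ ∀ Δ n : ℕ, 1 / c ≤ (Δ : ℝ) → Δ ≤ n →
      ∃ E : Finset (Finset (Fin n)),
        (∀ e ∈ E, e.card = k) ∧
        (∀ v : Fin n, (E.filter fun e => v ∈ e).card ≤ Δ) ∧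
        twR k (c * (Δ : ℝ)) * (n : ℝ) ≤ (ramseyNumber n 4 E : ℝ) := by
  exact main_aux k hk
end
end

section
/- Let m be a positive integer, s = ⌊2^{10^{-8}·m}⌋, and let E(K_s) = E_R ∪ E_B be a partition of the edges of the complete graph on {0,…,s−1} having the GRR property for m; let φ be the induced 2-coloring (red/blue) of the 2-element subsets of {0,…,s−1}. Let G ∈ 𝒢_m and set b = |V(G)|/m. Then there is no almost monochromatic embedding of G into φ[b]; that is, there is no map h : V(G) → {0,…,s−1} with |h^{-1}(i)| ≤ b for all i together with a color q ∈ {red, blue} such that every edge uv of G satisfies h(u) = h(v) or φ({h(u), h(v)}) = q. -/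
open Finset

attribute [local instance] Classical.propDecidable

noncomputable section

/-- `sBound m = ⌊2^(10⁻⁸·m)⌋`. -/
def sBound (m : ℕ) : ℕ := ⌊(2 : ℝ) ^ ((m : ℝ) / 10 ^ 8)⌋₊

/-- Membership in the family `𝒢_m`, for a graph with vertex set `Vs` and adjacency
relation `Adj`: for every partition of `Vs` into `s = ⌊2^(10⁻⁸·m)⌋` parts (encoded by a map
`P` into `Fin s`), all of size at most `|Vs|/m`, the sum of `|V_i|·|V_j|` over pairs of parts
joined by at least one edge exceeds `0.55·binom(|Vs|,2)`. -/
def MemGm (m : ℕ) {V : Type*} (Vs : Finset V) (Adj : V → V → Prop) : Prop :=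
  ∀ P : V → Fin (sBound m),
    (∀ i, ((Vs.filter fun v => P v = i).card : ℝ) ≤ (Vs.card : ℝ) / m) →
    0.55 * ((Vs.card : ℝ) * ((Vs.card : ℝ) - 1) / 2) <
      ∑ i : Fin (sBound m), ∑ j : Fin (sBound m),
        if i < j ∧ ∃ u ∈ Vs, ∃ v ∈ Vs, P u = i ∧ P v = j ∧ Adj u v then
          ((Vs.filter fun v => P v = i).card : ℝ) * ((Vs.filter fun v => P v = j).card : ℝ)
        else 0

/-- Let `s = ⌊2^(10⁻⁸·m)⌋`, let `c` be a partition of the edges of `K_s` with the GRR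
property for `m`, let `G ∈ 𝒢_m` and `b = |V(G)|/m`.  Then there is no almost monochromatic
embedding of `G` into `φ[b]`: no map `h : V(G) → {0,…,s−1}` with all fibers of size at most
`b` together with a color `q` such that every edge `uv` of `G` satisfies `h(u) = h(v)` or
`c (h u) (h v) = q`. -/
theorem stmt_8 (m : ℕ) (hm : 0 < m) (n : ℕ)
    (c : Fin (sBound m) → Fin (sBound m) → Bool) (hsym : ∀ i j, c i j = c j i)
    (hGRR : ∀ w : Fin (sBound m) → ℝ, (∀ i, w i ∈ Set.Icc (0 : ℝ) 1) →
      (m : ℝ) ≤ ∑ i, w i → ∀ col : Bool,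
        (∑ i, ∑ j, if i < j ∧ c i j = col then w i * w j else 0)
          < 0.51 * ((∑ i, w i) * ((∑ i, w i) - 1) / 2))
    (G : SimpleGraph (Fin n)) (hG : MemGm m Finset.univ G.Adj) :
    ¬ ∃ h : Fin n → Fin (sBound m),
        (∀ i, ((Finset.univ.filter fun v => h v = i).card : ℝ) ≤ (n : ℝ) / m) ∧
        ∃ q : Bool, ∀ u v, G.Adj u v → h u = h v ∨ c (h u) (h v) = q := by
  rintro ⟨h, hb, q, hq⟩
  have hG' := hG h (by simpa using hb)
  simp only [Finset.card_univ, Fintype.card_fin] at hG'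
  set a : Fin (sBound m) → ℝ := fun i => ((Finset.univ.filter fun v => h v = i).card : ℝ) with ha
  have ha0 : ∀ i, 0 ≤ a i := fun i => Nat.cast_nonneg _
  have hle : (∑ i : Fin (sBound m), ∑ j : Fin (sBound m),
        if i < j ∧ ∃ u ∈ (Finset.univ : Finset (Fin n)), ∃ v ∈ (Finset.univ : Finset (Fin n)),
          h u = i ∧ h v = j ∧ G.Adj u v then a i * a j else 0)
      ≤ ∑ i, ∑ j, if i < j ∧ c i j = q then a i * a j else 0 := by
    refine Finset.sum_le_sum fun i _ => Finset.sum_le_sum fun j _ => ?_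
    by_cases h1 : i < j ∧ ∃ u ∈ (Finset.univ : Finset (Fin n)),
        ∃ v ∈ (Finset.univ : Finset (Fin n)), h u = i ∧ h v = j ∧ G.Adj u v
    · have h2 : i < j ∧ c i j = q := by
        obtain ⟨hij, u, _, v, _, rfl, rfl, huv⟩ := h1
        exact ⟨hij, (hq u v huv).resolve_left hij.ne⟩
      rw [if_pos h1, if_pos h2]
    · rw [if_neg h1]
      split_ifs
      · exact mul_nonneg (ha0 i) (ha0 j)
      · exact le_rfl
  have hlt : 0.55 * ((n : ℝ) * ((n : ℝ) - 1) / 2) <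
      ∑ i, ∑ j, if i < j ∧ c i j = q then a i * a j else 0 := by
    refine lt_of_lt_of_le hG' (le_trans (le_of_eq ?_) hle)
    refine Finset.sum_congr rfl fun i _ => Finset.sum_congr rfl fun j _ => ?_
    congr
  have hmR : (0 : ℝ) < m := by exact_mod_cast hm
  have hsum : ∑ i, a i = n := by
    have := Finset.card_eq_sum_card_fiberwise (f := h) (s := Finset.univ) (t := Finset.univ)
      (by simp)
    simp only [Finset.card_univ, Fintype.card_fin] at this
    simp only [ha]
    exact_mod_cast this.symm
  rcases Nat.eq_zero_or_pos n with hn | hn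
  · have hz : ∀ i, a i = 0 := by
      intro i
      have := (Finset.sum_eq_zero_iff_of_nonneg (s := Finset.univ) (f := a) (fun i _ => ha0 i)).1
        (by rw [hsum, hn]; simp)
      exact this i (Finset.mem_univ i)
    simp [hz, hn] at hlt
  have hnR : (0 : ℝ) < n := by exact_mod_cast hn
  have hmn : (m : ℝ) ≤ n := by
    have h1 := hb (h ⟨0, hn⟩)
    have h2 : (1 : ℝ) ≤ ((Finset.univ.filter fun v => h v = h ⟨0, hn⟩).card : ℝ) := by
      have : 0 < (Finset.univ.filter fun v => h v = h ⟨0, hn⟩).card :=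
        Finset.card_pos.2 ⟨⟨0, hn⟩, by simp⟩
      exact_mod_cast this
    have h3 := h2.trans h1
    rwa [le_div_iff₀ hmR, one_mul] at h3
  have hws : ∑ i, a i * ((m : ℝ) / n) = m := by
    rw [← Finset.sum_mul, hsum]
    field_simp
  have key := hGRR (fun i => a i * ((m : ℝ) / n)) (by
    intro i
    refine ⟨mul_nonneg (ha0 i) (by positivity), ?_⟩
    have h1 : a i ≤ n / m := hb i
    calc a i * ((m : ℝ) / n) ≤ (n / m) * (m / n) := by gcongr
      _ = 1 := by field_simp) hws.ge q
  simp only [hws] at key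
  have hT : (∑ i, ∑ j, if i < j ∧ c i j = q then a i * ((m : ℝ) / n) * (a j * ((m : ℝ) / n)) else 0)
      = (∑ i, ∑ j, if i < j ∧ c i j = q then a i * a j else 0) * ((m : ℝ) / n) ^ 2 := by
    simp only [Finset.sum_mul]
    refine Finset.sum_congr rfl fun i _ => Finset.sum_congr rfl fun j _ => ?_
    split_ifs <;> ring
  rw [hT] at key
  generalize (∑ i, ∑ j, if i < j ∧ c i j = q then a i * a j else 0) = T at hlt key
  rw [div_pow, ← mul_div_assoc, div_lt_iff₀ (by positivity)] at key
  have h4 : 0.55 * ((n : ℝ) * (n - 1) / 2) * m ^ 2 < T * m ^ 2 :=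
    mul_lt_mul_of_pos_right hlt (by positivity)
  have h5 := h4.trans key
  have h1m : (1 : ℝ) ≤ m := by exact_mod_cast hm
  have h6 : 0.51 * (((m : ℝ) - 1) * n) ≤ 0.55 * ((n - 1) * m) := by
    nlinarith [mul_nonneg (sub_nonneg.2 h1m) hnR.le]
  have h7 := mul_le_mul_of_nonneg_left h6 (by positivity : (0 : ℝ) ≤ n * m / 2)
  nlinarith
end
end

section
/- Let k ≥ 3 be an integer, α ∈ (0,1], and set C = (16/α)^{5k}. Then for any integers m ≥ 10^9 and n with n ≥ C·m and α·n/2 ≥ 2^m, there exists an n-vertex k-uniform hypergraph that is (α, m)-good and has maximum degree at most C·m. -/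
open Finset

attribute [local instance] Classical.propDecidable

noncomputable section

/-- The adjacency relation of the graph `H(U; W_1, …, W_r)` (on vertex set `U`):
`u ≠ v` are adjacent if there are `w_i ∈ W_i` with `{u,v} ∪ {w_1,…,w_r} ∈ E`. -/
def hAdj {V : Type*} [DecidableEq V] {r : ℕ} (E : Finset (Finset V)) (W : Fin r → Finset V)
    (u v : V) : Prop :=
  u ≠ v ∧ ∃ w : Fin r → V, (∀ i, w i ∈ W i) ∧
    (({u, v} : Finset V) ∪ Finset.image w Finset.univ) ∈ E

/-- A `k`-uniform hypergraph with vertex set `Vs` and edge set `E` is `(α, m)`-good if for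
all pairwise disjoint `U, W_1, …, W_{k−2} ⊆ Vs` of size at least `α·|Vs|`, the graph
`H(U; W_1, …, W_{k−2})` is in `𝒢_m`. -/
def IsGood (k m : ℕ) (α : ℝ) {V : Type*} [DecidableEq V] (Vs : Finset V)
    (E : Finset (Finset V)) : Prop :=
  ∀ (U : Finset V) (W : Fin (k - 2) → Finset V),
    U ⊆ Vs → (∀ i, W i ⊆ Vs) →
    (∀ i, Disjoint U (W i)) → (∀ i j, i ≠ j → Disjoint (W i) (W j)) →
    α * (Vs.card : ℝ) ≤ (U.card : ℝ) → (∀ i, α * (Vs.card : ℝ) ≤ ((W i).card : ℝ)) →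
    MemGm m U (hAdj E W)

/-- Union bound: a random sequence of `M` points hits all dense sets. -/
theorem exists_hit {ι T : Type*} [Fintype ι] [Fintype T] [Nonempty T] (G : ι → Finset T)
    (M : ℕ) (δ : ℝ) (hG : ∀ i, δ * (Fintype.card T : ℝ) ≤ ((G i).card : ℝ))
    (h : (Fintype.card ι : ℝ) * Real.exp (-(δ * M)) < 1) :
    ∃ f : Fin M → T, ∀ i, ∃ r, f r ∈ G i := by
  by_contra hcon
  push Not at hcon
  have hN : (0 : ℝ) < Fintype.card T := by exact_mod_cast Fintype.card_pos
  have hsub : (Finset.univ : Finset (Fin M → T)) ⊆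
      Finset.univ.biUnion (fun i : ι => Fintype.piFinset (fun _ : Fin M => Finset.univ \ G i)) := by
    intro f _
    obtain ⟨i, hi⟩ := hcon f
    simp only [Finset.mem_biUnion, Finset.mem_univ, true_and, Fintype.mem_piFinset,
      Finset.mem_sdiff]
    exact ⟨i, hi⟩
  have h1 := (Finset.card_le_card hsub).trans Finset.card_biUnion_le
  have h2 : ((Fintype.card T : ℝ)) ^ M ≤
      ∑ i : ι, (((Finset.univ \ G i).card : ℝ)) ^ M := by
    have h3 : ((Finset.univ : Finset (Fin M → T)).card : ℝ) ≤
        ((∑ i : ι, (Fintype.piFinset (fun _ : Fin M => Finset.univ \ G i)).card : ℕ) : ℝ) := by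
      exact_mod_cast h1
    rw [Finset.card_univ, Fintype.card_fun, Fintype.card_fin] at h3
    simp only [Fintype.card_piFinset, Finset.prod_const, Finset.card_univ, Fintype.card_fin] at h3
    push_cast at h3
    exact h3
  have h4 : ∀ i : ι, (((Finset.univ \ G i).card : ℝ)) ^ M ≤
      (Fintype.card T : ℝ) ^ M * Real.exp (-(δ * M)) := by
    intro i
    have h5 : ((Finset.univ \ G i).card : ℝ) = Fintype.card T - (G i).card := by
      rw [Finset.cast_card_sdiff (Finset.subset_univ _), Finset.card_univ]
    have h6 : ((Finset.univ \ G i).card : ℝ) ≤ Fintype.card T * Real.exp (-δ) := by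
      rw [h5]
      have := Real.add_one_le_exp (-δ)
      nlinarith [hG i]
    calc (((Finset.univ \ G i).card : ℝ)) ^ M ≤ (Fintype.card T * Real.exp (-δ)) ^ M :=
          pow_le_pow_left₀ (by positivity) h6 M
      _ = _ := by
          rw [mul_pow, ← Real.exp_nat_mul]
          congr 2
          ring
  have h7 := h2.trans (Finset.sum_le_sum fun i _ => h4 i)
  rw [Finset.sum_const, Finset.card_univ, nsmul_eq_mul] at h7
  have hp : (0 : ℝ) < (Fintype.card T : ℝ) ^ M := by positivity
  nlinarith

/-- The vertex set underlying a tuple. -/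
def tEdge {n r : ℕ} (t : (Fin n × Fin n) × (Fin r → Fin n)) : Finset (Fin n) :=
  {t.1.1, t.1.2} ∪ Finset.image t.2 Finset.univ

theorem tEdge_card_le {n r : ℕ} (t : (Fin n × Fin n) × (Fin r → Fin n)) :
    (tEdge t).card ≤ r + 2 := by
  unfold tEdge
  refine (Finset.card_union_le _ _).trans ?_
  have h1 := Finset.card_le_two (a := t.1.1) (b := t.1.2)
  have h2 : (Finset.image t.2 Finset.univ).card ≤ r := by
    simpa using Finset.card_image_le (s := Finset.univ) (f := t.2)
  omega

theorem tEdge_card {n r : ℕ} (x y : Fin n) (w : Fin r → Fin n) (hxy : x ≠ y)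
    (hw : Function.Injective w) (hx : ∀ i, x ≠ w i) (hy : ∀ i, y ≠ w i) :
    (tEdge ((x, y), w)).card = r + 2 := by
  unfold tEdge
  rw [Finset.card_union_of_disjoint, Finset.card_pair hxy, Finset.card_image_of_injective _ hw]
  · simp [add_comm]
  · rw [Finset.disjoint_left]
    intro a ha hb
    simp only [Finset.mem_insert, Finset.mem_singleton] at ha
    obtain ⟨i, _, hi⟩ := Finset.mem_image.1 hb
    rcases ha with rfl | rfl
    · exact hx i hi.symm
    · exact hy i hi.symm

/-- Few vertices have high degree. -/
theorem high_degree {n r M : ℕ} (f : Fin M → (Fin n × Fin n) × (Fin r → Fin n)) (L : ℝ)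
    (B : Finset (Fin n))
    (hB : ∀ v ∈ B, L ≤ ((Finset.univ.filter fun q => v ∈ tEdge (f q)).card : ℝ)) :
    (B.card : ℝ) * L ≤ (r + 2 : ℝ) * M := by
  have h1 : (B.card : ℝ) * L ≤
      ∑ v ∈ B, ((Finset.univ.filter fun q => v ∈ tEdge (f q)).card : ℝ) := by
    rw [← nsmul_eq_mul]
    exact Finset.card_nsmul_le_sum _ _ _ hB
  have h2 : ∑ v ∈ B, ((Finset.univ.filter fun q => v ∈ tEdge (f q)).card : ℝ) ≤
      ∑ q : Fin M, ((tEdge (f q)).card : ℝ) := by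
    have : ∀ q, ((tEdge (f q)).card : ℝ) = ∑ v : Fin n, if v ∈ tEdge (f q) then (1 : ℝ) else 0 := by
      intro q
      rw [Finset.sum_boole]
      simp
    simp_rw [this, ← Finset.sum_boole]
    rw [Finset.sum_comm]
    refine Finset.sum_le_sum fun q _ => ?_
    exact Finset.sum_le_sum_of_subset_of_nonneg (Finset.subset_univ _)
      (fun i _ _ => by split_ifs <;> norm_num)
  have h3 : ∑ q : Fin M, ((tEdge (f q)).card : ℝ) ≤ ∑ q : Fin M, ((r + 2 : ℕ) : ℝ) :=
    Finset.sum_le_sum fun q _ => by exact_mod_cast tEdge_card_le (f q)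
  have h4 : ∑ q : Fin M, ((r + 2 : ℕ) : ℝ) = (r + 2 : ℝ) * M := by
    simp
    ring
  linarith

/-- Pairs of vertices of `U` whose classes form a pair of `S`. -/
def pairSet {n s : ℕ} (P : Fin n → Fin s) (S : Finset (Fin s × Fin s)) (U : Finset (Fin n)) :
    Finset (Fin n × Fin n) :=
  (U ×ˢ U).filter fun p => (P p.1, P p.2) ∈ S

theorem pairSet_card {n s : ℕ} (P : Fin n → Fin s) (S : Finset (Fin s × Fin s))
    (U : Finset (Fin n)) :
    ((pairSet P S U).card : ℝ) = ∑ i : Fin s, ∑ j : Fin s, if (i, j) ∈ S then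
      ((U.filter fun v => P v = i).card : ℝ) * ((U.filter fun v => P v = j).card : ℝ) else 0 := by
  have h := Finset.card_eq_sum_card_fiberwise (s := pairSet P S U)
    (t := (Finset.univ : Finset (Fin s × Fin s))) (f := fun p => (P p.1, P p.2))
    (fun _ _ => by simp)
  rw [h, ← Finset.univ_product_univ, Finset.sum_product]
  push_cast
  refine Finset.sum_congr rfl fun i _ => Finset.sum_congr rfl fun j _ => ?_
  split_ifs with hS
  · rw [← Nat.cast_mul, ← Finset.card_product]
    congr 2
    ext ⟨a, b⟩
    simp only [pairSet, Finset.mem_filter, Finset.mem_product, Prod.mk.injEq]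
    constructor
    · rintro ⟨⟨⟨h1, h2⟩, h3⟩, h4, h5⟩
      exact ⟨⟨h1, h4⟩, h2, h5⟩
    · rintro ⟨⟨h1, h4⟩, h2, h5⟩
      exact ⟨⟨⟨h1, h2⟩, by rw [h4, h5]; exact hS⟩, h4, h5⟩
  · rw [Nat.cast_eq_zero, Finset.card_eq_zero, Finset.filter_eq_empty_iff]
    intro p hp hpe
    simp only [pairSet, Finset.mem_filter] at hp
    rw [hpe] at hp
    exact hS hp.2

theorem pairSet_sdiff {n s : ℕ} (P : Fin n → Fin s) (S : Finset (Fin s × Fin s))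
    (U B : Finset (Fin n)) :
    ((pairSet P S U).card : ℝ) ≤ ((pairSet P S (U \ B)).card : ℝ) + 2 * U.card * B.card := by
  have hsub : pairSet P S U ⊆ pairSet P S (U \ B) ∪ (U ×ˢ B ∪ B ×ˢ U) := by
    rintro ⟨a, b⟩ h
    simp only [pairSet, Finset.mem_filter, Finset.mem_product, Finset.mem_union,
      Finset.mem_sdiff] at h ⊢
    tauto
  have h1 := (Finset.card_le_card hsub).trans (Finset.card_union_le _ _)
  have h2 := Finset.card_union_le (U ×ˢ B) (B ×ˢ U)
  rw [Finset.card_product, Finset.card_product] at h2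
  have h3 : (pairSet P S U).card ≤ (pairSet P S (U \ B)).card + 2 * U.card * B.card := by
    nlinarith
  exact_mod_cast h3

/-- Weight of the pairs of classes. -/
theorem weight_all {s : ℕ} (a : Fin s → ℝ) :
    ∑ i : Fin s, ∑ j : Fin s, (if i < j then a i * a j else 0) =
      ((∑ i, a i) ^ 2 - ∑ i, a i ^ 2) / 2 := by
  have h1 : (∑ i, a i) ^ 2 = ∑ i : Fin s, ∑ j : Fin s, a i * a j := by
    rw [sq, Finset.sum_mul_sum]
  have h2 : ∀ i j : Fin s, a i * a j = (if i < j then a i * a j else 0) +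
      (if j < i then a j * a i else 0) + (if i = j then a i * a j else 0) := by
    intro i j
    rcases lt_trichotomy i j with h | h | h
    · simp [h, h.ne, h.asymm]
    · simp [h]
    · simp [h, h.ne', h.asymm, mul_comm]
  have h3 : ∑ i : Fin s, ∑ j : Fin s, a i * a j =
      ∑ i : Fin s, ∑ j : Fin s, (if i < j then a i * a j else 0) +
      ∑ i : Fin s, ∑ j : Fin s, (if j < i then a j * a i else 0) + ∑ i, a i ^ 2 := by
    rw [← Finset.sum_add_distrib, ← Finset.sum_add_distrib]
    refine Finset.sum_congr rfl fun i _ => ?_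
    rw [Finset.sum_congr rfl fun j _ => h2 i j, Finset.sum_add_distrib, Finset.sum_add_distrib]
    congr 1
    simp [sq]
  have h4 : ∑ i : Fin s, ∑ j : Fin s, (if j < i then a j * a i else 0) =
      ∑ i : Fin s, ∑ j : Fin s, (if i < j then a i * a j else 0) := Finset.sum_comm
  rw [h1, h3, h4]
  ring

theorem sq_sum_le {s : ℕ} (a : Fin s → ℝ) (t : ℝ) (h0 : ∀ i, 0 ≤ a i) (h : ∀ i, a i ≤ t) :
    ∑ i, a i ^ 2 ≤ t * ∑ i, a i := by
  rw [Finset.mul_sum]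
  exact Finset.sum_le_sum fun i _ => by nlinarith [h0 i, h i]

/-- The deterministic core: missing pairs of classes carry a lot of weight. -/
theorem missing_weight {n s m : ℕ} (hm : 10 ^ 9 ≤ m) (P : Fin n → Fin s) (U : Finset (Fin n))
    (Adj : Fin s → Fin s → Prop)
    (hP : ∀ i, ((U.filter fun v => P v = i).card : ℝ) ≤ (U.card : ℝ) / m)
    (hA : ∑ i : Fin s, ∑ j : Fin s, (if i < j ∧ Adj i j then
      ((U.filter fun v => P v = i).card : ℝ) * ((U.filter fun v => P v = j).card : ℝ) else 0)
      ≤ 0.55 * ((U.card : ℝ) * ((U.card : ℝ) - 1) / 2)) :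
    0.2 * (U.card : ℝ) ^ 2 ≤
      ((pairSet P (Finset.univ.filter fun p => p.1 < p.2 ∧ ¬ Adj p.1 p.2) U).card : ℝ) := by
  rw [pairSet_card]
  set a : Fin s → ℝ := fun i => ((U.filter fun v => P v = i).card : ℝ) with ha
  have hsum : ∑ i, a i = U.card := by
    rw [Finset.card_eq_sum_card_fiberwise (s := U) (t := Finset.univ) (f := P)
      (fun _ _ => by simp)]
    push_cast
    rfl
  have h1 := weight_all a
  have h2 := sq_sum_le a _ (fun i => by positivity) hP
  rw [hsum] at h1 h2
  have h3 : ∑ i : Fin s, ∑ j : Fin s, (if i < j then a i * a j else 0) =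
      ∑ i : Fin s, ∑ j : Fin s, (if i < j ∧ Adj i j then a i * a j else 0) +
      ∑ i : Fin s, ∑ j : Fin s, (if (i, j) ∈
        (Finset.univ.filter fun p : Fin s × Fin s => p.1 < p.2 ∧ ¬ Adj p.1 p.2)
        then a i * a j else 0) := by
    rw [← Finset.sum_add_distrib]
    refine Finset.sum_congr rfl fun i _ => ?_
    rw [← Finset.sum_add_distrib]
    refine Finset.sum_congr rfl fun j _ => ?_
    by_cases hij : i < j <;> by_cases hA : Adj i j <;> simp [hij, hA]
  have hu : (0 : ℝ) ≤ U.card := by positivity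
  have hm' : (10 : ℝ) ^ 9 ≤ m := by exact_mod_cast hm
  have h4 : (U.card : ℝ) / m * U.card ≤ 0.01 * (U.card : ℝ) ^ 2 := by
    have : (U.card : ℝ) / m ≤ 0.01 * U.card := by
      rw [div_le_iff₀ (by linarith)]
      nlinarith
    nlinarith
  have h5 : ∑ i : Fin s, ∑ j : Fin s, (if i < j ∧ Adj i j then a i * a j else 0)
      ≤ 0.55 * ((U.card : ℝ) * ((U.card : ℝ) - 1) / 2) := hA
  nlinarith

/-- A random sequence of tuples hits all dense configurations. -/
theorem random_tuples {n r m s M : ℕ} (α : ℝ) (hα : 0 < α) (hn : 0 < n)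
    (hs : s ≤ 2 ^ m) (hs2 : s * s ≤ n)
    (hM : ((n * (m + r + 2) : ℕ) : ℝ) ≤ 0.4 * (α / 2) ^ (r + 2) * M) :
    ∃ f : Fin M → (Fin n × Fin n) × (Fin r → Fin n),
      ∀ (P : Fin n → Fin s) (S : Finset (Fin s × Fin s)) (U : Finset (Fin n))
        (W : Fin r → Finset (Fin n)), 0.1 * (α * n) ^ 2 ≤ ((pairSet P S U).card : ℝ) →
        (∀ l, α * n / 2 ≤ ((W l).card : ℝ)) →
        ∃ q, (f q).1 ∈ pairSet P S U ∧ ∀ l, (f q).2 l ∈ W l := by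
  have : Nonempty (Fin n) := ⟨⟨0, hn⟩⟩
  let ι := {c : (Fin n → Fin s) × Finset (Fin s × Fin s) × Finset (Fin n) ×
    (Fin r → Finset (Fin n)) // 0.1 * (α * n) ^ 2 ≤ ((pairSet c.1 c.2.1 c.2.2.1).card : ℝ) ∧
        (∀ l, α * n / 2 ≤ ((c.2.2.2 l).card : ℝ))}
  let G : ι → Finset ((Fin n × Fin n) × (Fin r → Fin n)) := fun c =>
    pairSet c.1.1 c.1.2.1 c.1.2.2.1 ×ˢ Fintype.piFinset c.1.2.2.2
  have hcard : Fintype.card ι ≤ 2 ^ (n * (m + r + 2)) := by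
    refine (Fintype.card_subtype_le _).trans ?_
    simp only [Fintype.card_prod, Fintype.card_fun, Fintype.card_finset, Fintype.card_fin]
    calc s ^ n * (2 ^ (s * s) * (2 ^ n * (2 ^ n) ^ r))
        ≤ (2 ^ m) ^ n * (2 ^ n * (2 ^ n * (2 ^ n) ^ r)) := by
          gcongr
          norm_num
      _ = 2 ^ (n * (m + r + 2)) := by
          rw [← pow_mul, ← pow_mul, ← pow_add, ← pow_add, ← pow_add]
          congr 1
          ring
  obtain ⟨f, hf⟩ := exists_hit G M (0.4 * (α / 2) ^ (r + 2)) (by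
    rintro ⟨⟨P, S, U, W⟩, h1, h2⟩
    simp only [G, Finset.card_product, Fintype.card_piFinset, Fintype.card_prod, Fintype.card_fun,
      Fintype.card_fin]
    push_cast
    have h3 : (α * n / 2) ^ r ≤ ∏ l : Fin r, ((W l).card : ℝ) := by
      have := Finset.prod_le_prod (s := (Finset.univ : Finset (Fin r)))
        (f := fun _ => α * n / 2) (g := fun l => ((W l).card : ℝ))
        (fun _ _ => by positivity) (fun l _ => h2 l)
      rw [Finset.prod_const, Finset.card_univ, Fintype.card_fin] at this
      exact this
    calc 0.4 * (α / 2) ^ (r + 2) * ((n : ℝ) * n * n ^ r)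
        = 0.1 * (α * n) ^ 2 * (α * n / 2) ^ r := by
          have : α * n / 2 = α / 2 * n := by ring
          rw [this, mul_pow (α / 2), pow_add]
          ring
      _ ≤ _ := mul_le_mul h1 h3 (by positivity) (by positivity)) (by
    have hX : (0 : ℝ) < ((n * (m + r + 2) : ℕ) : ℝ) := by
      exact_mod_cast Nat.mul_pos hn (by omega)
    have h1 : (Fintype.card ι : ℝ) ≤ 2 ^ (n * (m + r + 2)) := by exact_mod_cast hcard
    have h2 : Real.exp (-(0.4 * (α / 2) ^ (r + 2) * M)) ≤
        Real.exp (-((n * (m + r + 2) : ℕ) : ℝ)) := Real.exp_le_exp.2 (neg_le_neg hM)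
    have h3 : (2 : ℝ) ^ (n * (m + r + 2)) < Real.exp ((n * (m + r + 2) : ℕ) : ℝ) := by
      rw [← mul_one ((n * (m + r + 2) : ℕ) : ℝ), Real.exp_nat_mul]
      refine pow_lt_pow_left₀ ?_ (by norm_num) (Nat.mul_pos hn (by omega)).ne'
      linarith [Real.exp_one_gt_d9]
    calc (Fintype.card ι : ℝ) * Real.exp (-(0.4 * (α / 2) ^ (r + 2) * M))
        ≤ 2 ^ (n * (m + r + 2)) * Real.exp (-((n * (m + r + 2) : ℕ) : ℝ)) :=
          mul_le_mul h1 h2 (Real.exp_pos _).le (by positivity)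
      _ < Real.exp ((n * (m + r + 2) : ℕ) : ℝ) * Real.exp (-((n * (m + r + 2) : ℕ) : ℝ)) :=
          mul_lt_mul_of_pos_right h3 (Real.exp_pos _)
      _ = 1 := by rw [← Real.exp_add]; simp)
  refine ⟨f, fun P S U W h1 h2 => ?_⟩
  obtain ⟨q, hq⟩ := hf ⟨(P, S, U, W), h1, h2⟩
  simp only [G, Finset.mem_product, Fintype.mem_piFinset] at hq
  exact ⟨q, hq.1, hq.2⟩

theorem sBound_sq {m : ℕ} : sBound m * sBound m ≤ 2 ^ m := by
  have h1 : ((sBound m : ℕ) : ℝ) ≤ (2 : ℝ) ^ ((m : ℝ) / 10 ^ 8) :=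
    Nat.floor_le (by positivity)
  have h2 : ((sBound m : ℕ) : ℝ) * (sBound m : ℝ) ≤ 2 ^ m := by
    calc ((sBound m : ℕ) : ℝ) * (sBound m : ℝ)
        ≤ (2 : ℝ) ^ ((m : ℝ) / 10 ^ 8) * (2 : ℝ) ^ ((m : ℝ) / 10 ^ 8) :=
          mul_le_mul h1 h1 (by positivity) (by positivity)
      _ = (2 : ℝ) ^ ((m : ℝ) / 10 ^ 8 + (m : ℝ) / 10 ^ 8) := (Real.rpow_add (by norm_num) _ _).symm
      _ ≤ (2 : ℝ) ^ (m : ℝ) := by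
          apply Real.rpow_le_rpow_of_exponent_le (by norm_num)
          have : (0 : ℝ) ≤ m := by positivity
          linarith
      _ = 2 ^ m := Real.rpow_natCast _ _
  exact_mod_cast h2

/-- The numerical estimate for the number of vertices of high degree. -/
theorem numeric {k m n : ℕ} (hk : 3 ≤ k) (hm : 10 ^ 9 ≤ m) (hn : 0 < n) (α : ℝ) (hα : 0 < α)
    (hα1 : α ≤ 1) (M : ℝ)
    (hM : M ≤ (n * (m + k) : ℝ) / (0.4 * (α / 2) ^ k) + 1) :
    (k : ℝ) * M ≤ α * n / 100 * ((16 / α) ^ (5 * k) * m) := by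
  have hk' : (3 : ℝ) ≤ k := by exact_mod_cast hk
  have hm' : (10 : ℝ) ^ 9 ≤ m := by exact_mod_cast hm
  have hn' : (1 : ℝ) ≤ n := by exact_mod_cast hn
  obtain ⟨b, hb, hbα⟩ : ∃ b : ℝ, 2 ≤ b ∧ α = 2 / b := by
    refine ⟨2 / α, ?_, by field_simp⟩
    rw [le_div_iff₀ hα]
    linarith
  have hb0 : 0 < b := by linarith
  have e1 : (n * (m + k) : ℝ) / (0.4 * (α / 2) ^ k) = 2.5 * (n * (m + k)) * b ^ k := by
    have : α / 2 = b⁻¹ := by rw [hbα]; field_simp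
    rw [this, inv_pow]
    field_simp
    norm_num
  have hbk : (1 : ℝ) ≤ b ^ k := one_le_pow₀ (by linarith)
  have hmk : (m : ℝ) + k ≤ m * k := by nlinarith
  have hbig : (1 : ℝ) ≤ n * (m * k) * b ^ k := by
    have : (1 : ℝ) ≤ n * (m * k) := by nlinarith
    nlinarith
  have h1 : M ≤ 3.5 * (n * (m * k) * b ^ k) := by
    rw [e1] at hM
    have : (n * (m + k) : ℝ) * b ^ k ≤ n * (m * k) * b ^ k := by gcongr
    linarith
  have e2 : (16 / α) ^ (5 * k) = (8 : ℝ) ^ (5 * k) * b ^ (5 * k) := by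
    rw [← mul_pow, hbα]
    congr 1
    field_simp
    norm_num
  have hk2 : (k : ℝ) ^ 2 ≤ 4 ^ k := by
    have : (k : ℝ) ≤ 2 ^ k := by exact_mod_cast Nat.lt_two_pow_self.le
    calc (k : ℝ) ^ 2 ≤ (2 ^ k) ^ 2 := by gcongr
      _ = 4 ^ k := by rw [← pow_mul, mul_comm, pow_mul]; norm_num
  have h8 : 175 * (4 : ℝ) ^ k ≤ 8 ^ (5 * k) := by
    have : (8 : ℝ) ^ (5 * k) = 8192 ^ k * 4 ^ k := by
      rw [pow_mul, ← mul_pow]; norm_num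
    rw [this]
    have h2 : (8192 : ℝ) ≤ 8192 ^ k := le_self_pow₀ (by norm_num) (by omega)
    gcongr
    linarith
  have hb5 : b ^ (k + 1) ≤ b ^ (5 * k) := pow_le_pow_right₀ (by linarith) (by omega)
  have key : 175 * (k : ℝ) ^ 2 * b ^ (k + 1) ≤ 8 ^ (5 * k) * b ^ (5 * k) :=
    mul_le_mul (by linarith) hb5 (by positivity) (by positivity)
  rw [e2, ← sub_nonneg]
  have h3 : (k : ℝ) * M ≤ k * (3.5 * (n * (m * k) * b ^ k)) := by gcongr
  have h4 : (k : ℝ) * (3.5 * (n * (m * k) * b ^ k)) =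
      (175 * (k : ℝ) ^ 2 * b ^ (k + 1)) * (n * m * (2 / b) / 100) := by
    rw [pow_succ]
    field_simp
    ring
  have h5 : (175 * (k : ℝ) ^ 2 * b ^ (k + 1)) * (n * m * (2 / b) / 100) ≤
      (8 ^ (5 * k) * b ^ (5 * k)) * (n * m * (2 / b) / 100) := by gcongr
  rw [hbα]
  nlinarith

/-- For `k ≥ 3`, `α ∈ (0,1]`, `C = (16/α)^{5k}`, any `m ≥ 10⁹` and `n` with `n ≥ C·m` and
`α·n/2 ≥ 2^m`, there is an `n`-vertex `(α, m)`-good `k`-uniform hypergraph with maximum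
degree at most `C·m`. -/
theorem stmt_10 (k : ℕ) (hk : 3 ≤ k) (α : ℝ) (hα : α ∈ Set.Ioc (0 : ℝ) 1)
    (m n : ℕ) (hm : 10 ^ 9 ≤ m) (hn : (16 / α) ^ (5 * k) * m ≤ (n : ℝ))
    (hn2 : (2 : ℝ) ^ m ≤ α * n / 2) :
    ∃ E : Finset (Finset (Fin n)),
      (∀ e ∈ E, e.card = k) ∧
      IsGood k m α Finset.univ E ∧
      ∀ v : Fin n, ((E.filter fun e => v ∈ e).card : ℝ) ≤ (16 / α) ^ (5 * k) * m := by
  obtain ⟨hα0, hα1⟩ := hα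
  obtain ⟨r, rfl⟩ : ∃ r, k = r + 2 := ⟨k - 2, by omega⟩
  have hpow : (0 : ℝ) < (2 : ℝ) ^ m := by positivity
  have hnpos : 0 < n := by
    rcases Nat.eq_zero_or_pos n with h | h
    · subst h
      simp at hn2
      linarith
    · exact h
  have hn0 : (0 : ℝ) < n := by exact_mod_cast hnpos
  have hm0 : (0 : ℝ) < m := by
    have : 0 < m := by omega
    exact_mod_cast this
  have hpn : 2 ^ m ≤ n := by
    have : (2 : ℝ) ^ m ≤ n := by nlinarith
    exact_mod_cast this
  set L : ℝ := (16 / α) ^ (5 * (r + 2)) * m with hL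
  have hL0 : 0 < L := by positivity
  have hδ : (0 : ℝ) < 0.4 * (α / 2) ^ (r + 2) := by positivity
  set M : ℕ := ⌈(n * (m + (r + 2 : ℕ)) : ℝ) / (0.4 * (α / 2) ^ (r + 2))⌉₊ with hMdef
  have hM1 : (n * (m + (r + 2 : ℕ)) : ℝ) / (0.4 * (α / 2) ^ (r + 2)) ≤ M := Nat.le_ceil _
  have hM2 : (M : ℝ) ≤ (n * (m + (r + 2 : ℕ)) : ℝ) / (0.4 * (α / 2) ^ (r + 2)) + 1 :=
    (Nat.ceil_lt_add_one (by positivity)).le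
  obtain ⟨f, hf⟩ := random_tuples (n := n) (r := r) (m := m) (s := sBound m) (M := M) α hα0 hnpos
    ((Nat.le_mul_self _).trans sBound_sq) (sBound_sq.trans hpn) (by
      rw [div_le_iff₀ hδ] at hM1
      push_cast at hM1 ⊢
      linarith)
  let B : Finset (Fin n) := Finset.univ.filter fun v =>
    L < ((Finset.univ.filter fun q => v ∈ tEdge (f q)).card : ℝ)
  have hB : (B.card : ℝ) ≤ α * n / 100 := by
    have h1 := high_degree f L B (fun v hv => by
      simp only [B, Finset.mem_filter] at hv
      exact hv.2.le)
    have h2 := numeric hk hm hnpos α hα0 hα1 M hM2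
    push_cast at h2
    exact le_of_mul_le_mul_right (h1.trans h2) hL0
  obtain ⟨E, hE⟩ : ∃ E : Finset (Finset (Fin n)), ∀ e, e ∈ E ↔
      (∃ q, tEdge (f q) = e) ∧ e.card = r + 2 ∧ Disjoint e B :=
    ⟨(Finset.univ.image fun q => tEdge (f q)).filter
      fun e => e.card = r + 2 ∧ Disjoint e B, fun e => by simp⟩
  refine ⟨E, ?_, ?_, ?_⟩
  · intro e he
    exact ((hE e).1 he).2.1
  · intro U W _ _ hUW hWW hU hW P hP
    by_contra hcon
    rw [not_lt] at hcon
    rw [Finset.card_univ, Fintype.card_fin] at hU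
    simp only [Finset.card_univ, Fintype.card_fin] at hW
    obtain ⟨A, hA⟩ : ∃ A : Fin (sBound m) → Fin (sBound m) → Prop, ∀ i j, A i j ↔
        ∃ u ∈ U, ∃ v ∈ U, P u = i ∧ P v = j ∧ hAdj E W u v := ⟨_, fun _ _ => Iff.rfl⟩
    simp only [← hA] at hcon
    have h1 := missing_weight hm P U A hP hcon
    obtain ⟨S, hS⟩ : ∃ S : Finset (Fin (sBound m) × Fin (sBound m)), S =
      Finset.univ.filter fun p => p.1 < p.2 ∧ ¬ A p.1 p.2 := ⟨_, rfl⟩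
    rw [← hS] at h1
    have h2 := pairSet_sdiff P S U B
    have hαn : 0 < α * n := by positivity
    obtain ⟨q, hq1, hq2⟩ := hf P S (U \ B)
      (fun l => W l \ B) (by
        have h3 : (B.card : ℝ) ≤ U.card / 100 := by linarith
        have h4 : 2 * (U.card : ℝ) * B.card ≤ 0.02 * (U.card : ℝ) ^ 2 := by
          nlinarith
        have h5 : (α * n) ^ 2 ≤ (U.card : ℝ) ^ 2 := by gcongr
        nlinarith) (fun l => by
        have h3 : (W l).card ≤ (W l \ B).card + B.card := by
          have := Finset.le_card_sdiff B (W l)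
          omega
        have h4 : ((W l).card : ℝ) ≤ (W l \ B).card + B.card := by exact_mod_cast h3
        linarith [hW l])
    rcases hfq : f q with ⟨⟨x, y⟩, w⟩
    rw [hfq] at hq1 hq2
    simp only [hS, pairSet, Finset.mem_filter, Finset.mem_product, Finset.mem_sdiff, Finset.mem_univ,
      true_and] at hq1 hq2
    obtain ⟨⟨⟨hxU, hxB⟩, hyU, hyB⟩, hlt, hno⟩ := hq1
    have hxy : x ≠ y := fun h => by
      rw [h] at hlt
      exact lt_irrefl _ hlt
    refine hno ((hA _ _).2 ⟨x, hxU, y, hyU, rfl, rfl, hxy, w, fun l => (hq2 l).1, ?_⟩)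
    have hmem : tEdge ((x, y), w) ∈ E := by
      refine (hE _).2 ⟨⟨q, by rw [hfq]⟩, ?_, ?_⟩
      · refine tEdge_card x y w hxy ?_ ?_ ?_
        · intro i j hij
          by_contra hne
          exact Finset.disjoint_left.1 (hWW i j hne) (hq2 i).1 (hij ▸ (hq2 j).1)
        · intro i h
          exact Finset.disjoint_left.1 (hUW i) hxU (h ▸ (hq2 i).1)
        · intro i h
          exact Finset.disjoint_left.1 (hUW i) hyU (h ▸ (hq2 i).1)
      · rw [Finset.disjoint_left]
        intro a ha hab
        simp only [tEdge, Finset.mem_union, Finset.mem_insert, Finset.mem_singleton,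
          Finset.mem_image, Finset.mem_univ, true_and] at ha
        rcases ha with (rfl | rfl) | ⟨i, rfl⟩
        · exact hxB hab
        · exact hyB hab
        · exact (hq2 i).2 hab
    convert hmem using 1
    simp only [tEdge]
  · intro v
    by_cases hv : v ∈ B
    · rw [Finset.filter_eq_empty_iff.2]
      · simpa using hL0.le
      · intro e he hve
        exact Finset.disjoint_left.1 ((hE e).1 he).2.2 hve hv
    · have h1 : ((Finset.univ.filter fun q => v ∈ tEdge (f q)).card : ℝ) ≤ L := by
        by_contra hc
        exact hv (Finset.mem_filter.2 ⟨Finset.mem_univ _, not_le.1 hc⟩)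
      refine le_trans ?_ h1
      rw [Nat.cast_le]
      refine (Finset.card_le_card (t := (Finset.univ.filter fun q => v ∈ tEdge (f q)).image
        fun q => tEdge (f q)) ?_).trans Finset.card_image_le
      intro e he
      obtain ⟨he1, hve⟩ := Finset.mem_filter.1 he
      obtain ⟨q, rfl⟩ := ((hE e).1 he1).1
      exact Finset.mem_image.2 ⟨q, Finset.mem_filter.2 ⟨Finset.mem_univ _, hve⟩, rfl⟩
end
end
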